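/- arXiv:2107.14487 — 3 statements merged into one kernel-verified Lean document; each statement's English description precedes it below -/
import Mathlib

section
/- For all n, k ∈ ℕ, every labelled sequent derivable in the labelled calculus G3DS_n^k is derivable in the refined labelled calculus DS_n^k L. -/
/-!
Labelled sequent calculi for deontic STIT logics `DS_n^k`.
-/

namespace DeonticStit

/-- Deontic STIT formulae in negation normal form, with agents in `Fin (n+1)`:
literals `p`, `p̄` and the connectives `∨`, `∧`, `□`, `◇`, `[i]`, `⟨i⟩`,
`⊗_i`, `⊖_i`. -/
inductive SFml (n : ℕ) : Type
  | pos : ℕ → SFml n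
  | neg : ℕ → SFml n
  | or  : SFml n → SFml n → SFml n
  | and : SFml n → SFml n → SFml n
  | box : SFml n → SFml n
  | dia : SFml n → SFml n
  | abox : Fin (n + 1) → SFml n → SFml n
  | adia : Fin (n + 1) → SFml n → SFml n
  | obl : Fin (n + 1) → SFml n → SFml n
  | per : Fin (n + 1) → SFml n → SFml n

/-- Multisets of relational atoms `R_[i] w u`. -/
abbrev RAt (n : ℕ) : Type := Multiset (Fin (n + 1) × ℕ × ℕ)

/-- Multisets of deontic atoms `I_{⊗_i} u`. -/
abbrev DAt (n : ℕ) : Type := Multiset (Fin (n + 1) × ℕ)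

/-- Multisets of labelled formulae `w : φ`. -/
abbrev SSeq (n : ℕ) : Type := Multiset (ℕ × SFml n)

/-- The label `v` occurs in the labelled sequent `RA, IA ⊢ Γ`. -/
def soccurs {n : ℕ} (v : ℕ) (RA : RAt n) (IA : DAt n) (Γ : SSeq n) : Prop :=
  (∃ i w u, (i, w, u) ∈ RA ∧ (v = w ∨ v = u)) ∨ (∃ i, (i, v) ∈ IA) ∨ ∃ φ, (v, φ) ∈ Γ

/-- Undirected `i`-paths: `IPath RA i w u` holds iff `w = u` or there is a
sequence of atoms, each of the form `R_[i] v z` or `R_[i] z v`, linking `w`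
to `u`. -/
inductive IPath {n : ℕ} (RA : RAt n) (i : Fin (n + 1)) : ℕ → ℕ → Prop
  | refl (w : ℕ) : IPath RA i w w
  | fwd {w u v : ℕ} : (i, w, u) ∈ RA → IPath RA i u v → IPath RA i w v
  | bwd {w u v : ℕ} : (i, u, w) ∈ RA → IPath RA i u v → IPath RA i w v

/-- The negation-normal-form negation `φ̄` of a deontic STIT formula. -/
def SFml.negnnf {n : ℕ} : SFml n → SFml n
  | SFml.pos p => SFml.neg p
  | SFml.neg p => SFml.pos p
  | SFml.or φ ψ => SFml.and φ.negnnf ψ.negnnf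
  | SFml.and φ ψ => SFml.or φ.negnnf ψ.negnnf
  | SFml.box φ => SFml.dia φ.negnnf
  | SFml.dia φ => SFml.box φ.negnnf
  | SFml.abox i φ => SFml.adia i φ.negnnf
  | SFml.adia i φ => SFml.abox i φ.negnnf
  | SFml.obl i φ => SFml.per i φ.negnnf
  | SFml.per i φ => SFml.obl i φ.negnnf

/-- Substitution of the label `w` for the label `u`. -/
def substLbl (w u v : ℕ) : ℕ := if v = u then w else v

/-- Label substitution on relational atoms. -/
def substRAt {n : ℕ} (w u : ℕ) (RA : RAt n) : RAt n :=
  RA.map fun t => (t.1, substLbl w u t.2.1, substLbl w u t.2.2)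

/-- Label substitution on deontic atoms. -/
def substDAt {n : ℕ} (w u : ℕ) (IA : DAt n) : DAt n :=
  IA.map fun t => (t.1, substLbl w u t.2)

/-- Label substitution on labelled formulae. -/
def substSSeq {n : ℕ} (w u : ℕ) (Γ : SSeq n) : SSeq n :=
  Γ.map fun t => (substLbl w u t.1, t.2)

/-- Gated labelled sequent calculi for deontic STIT logics.  The rules `(id)`,
`(∨r)`, `(∧r)`, `(◇)`, `(□)`, `([i])`, `(⊗_i)`, `(IOA)` and (for `k > 0`)
`(APC_i^k)` are always present; the propagation rules `(Pr_⟨i⟩)`, `(Pr_⊖i¹)`,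
`(Pr_⊖i²)` are present exactly when the gate `gR` holds; the rules `(⟨i⟩)`,
`(⊖_i)` and the structural rules `(ref_i)`, `(euc_i)`, `(D2^i)`, `(D3^i)` are
present exactly when the gate `gG` holds; and the rules of `Str(DS)` (label
substitution, weakening, contractions, cut) are present exactly when the gate
`gS` holds.  In particular `SDer n k False True False` is `G3DS_n^k`,
`SDer n k True False False` is `DS_n^k L`, and `SDer n k True False True` is
`DS_n^k L + Str(DS)`. -/
inductive SDer (n k : ℕ) (gR gG gS : Prop) : RAt n → DAt n → SSeq n → Prop
  | id (RA : RAt n) (IA : DAt n) (Γ : SSeq n) (w p : ℕ) :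
      SDer n k gR gG gS RA IA ((w, SFml.pos p) ::ₘ (w, SFml.neg p) ::ₘ Γ)
  | orr {RA : RAt n} {IA : DAt n} {Γ : SSeq n} {w : ℕ} {φ ψ : SFml n} :
      SDer n k gR gG gS RA IA ((w, φ) ::ₘ (w, ψ) ::ₘ Γ) →
      SDer n k gR gG gS RA IA ((w, SFml.or φ ψ) ::ₘ Γ)
  | andr {RA : RAt n} {IA : DAt n} {Γ : SSeq n} {w : ℕ} {φ ψ : SFml n} :
      SDer n k gR gG gS RA IA ((w, φ) ::ₘ Γ) →
      SDer n k gR gG gS RA IA ((w, ψ) ::ₘ Γ) →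
      SDer n k gR gG gS RA IA ((w, SFml.and φ ψ) ::ₘ Γ)
  | diar {RA : RAt n} {IA : DAt n} {Γ : SSeq n} {w u : ℕ} {φ : SFml n} :
      SDer n k gR gG gS RA IA ((w, SFml.dia φ) ::ₘ (u, φ) ::ₘ Γ) →
      SDer n k gR gG gS RA IA ((w, SFml.dia φ) ::ₘ Γ)
  | boxr {RA : RAt n} {IA : DAt n} {Γ : SSeq n} {w u : ℕ} {φ : SFml n} :
      ¬ soccurs u RA IA ((w, SFml.box φ) ::ₘ Γ) →
      SDer n k gR gG gS RA IA ((u, φ) ::ₘ Γ) →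
      SDer n k gR gG gS RA IA ((w, SFml.box φ) ::ₘ Γ)
  | aboxr {RA : RAt n} {IA : DAt n} {Γ : SSeq n} {w u : ℕ} {i : Fin (n + 1)}
      {φ : SFml n} :
      ¬ soccurs u RA IA ((w, SFml.abox i φ) ::ₘ Γ) →
      SDer n k gR gG gS ((i, w, u) ::ₘ RA) IA ((u, φ) ::ₘ Γ) →
      SDer n k gR gG gS RA IA ((w, SFml.abox i φ) ::ₘ Γ)
  | oblr {RA : RAt n} {IA : DAt n} {Γ : SSeq n} {w u : ℕ} {i : Fin (n + 1)}
      {φ : SFml n} :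
      ¬ soccurs u RA IA ((w, SFml.obl i φ) ::ₘ Γ) →
      SDer n k gR gG gS RA ((i, u) ::ₘ IA) ((u, φ) ::ₘ Γ) →
      SDer n k gR gG gS RA IA ((w, SFml.obl i φ) ::ₘ Γ)
  | ioa {RA : RAt n} {IA : DAt n} {Γ : SSeq n} (ws : Fin (n + 1) → ℕ) (u : ℕ) :
      ¬ soccurs u RA IA Γ →
      SDer n k gR gG gS ((Finset.univ.val.map fun i => (i, ws i, u)) + RA) IA Γ →
      SDer n k gR gG gS RA IA Γ
  | apc {RA : RAt n} {IA : DAt n} {Γ : SSeq n} (hk : 0 < k) (i : Fin (n + 1))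
      (ws : Fin (k + 1) → ℕ) :
      (∀ m j : Fin (k + 1), (m : ℕ) < (j : ℕ) →
        SDer n k gR gG gS ((i, ws m, ws j) ::ₘ RA) IA Γ) →
      SDer n k gR gG gS RA IA Γ
  | prAdia {RA : RAt n} {IA : DAt n} {Γ : SSeq n} {u v : ℕ} {i : Fin (n + 1)}
      {φ : SFml n} :
      gR → IPath RA i u v →
      SDer n k gR gG gS RA IA ((u, SFml.adia i φ) ::ₘ (v, φ) ::ₘ Γ) →
      SDer n k gR gG gS RA IA ((u, SFml.adia i φ) ::ₘ Γ)
  | prPer1 {RA : RAt n} {IA : DAt n} {Γ : SSeq n} {w u v : ℕ} {i : Fin (n + 1)}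
      {φ : SFml n} :
      gR → IPath RA i u v →
      SDer n k gR gG gS RA ((i, u) ::ₘ IA) ((w, SFml.per i φ) ::ₘ (v, φ) ::ₘ Γ) →
      SDer n k gR gG gS RA ((i, u) ::ₘ IA) ((w, SFml.per i φ) ::ₘ Γ)
  | prPer2 {RA : RAt n} {IA : DAt n} {Γ : SSeq n} {w u : ℕ} {i : Fin (n + 1)}
      {φ : SFml n} :
      gR → ¬ soccurs u RA IA ((w, SFml.per i φ) ::ₘ Γ) →
      SDer n k gR gG gS RA ((i, u) ::ₘ IA) ((w, SFml.per i φ) ::ₘ (u, φ) ::ₘ Γ) →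
      SDer n k gR gG gS RA IA ((w, SFml.per i φ) ::ₘ Γ)
  | adiar {RA : RAt n} {IA : DAt n} {Γ : SSeq n} {w u : ℕ} {i : Fin (n + 1)}
      {φ : SFml n} :
      gG →
      SDer n k gR gG gS ((i, w, u) ::ₘ RA) IA
        ((w, SFml.adia i φ) ::ₘ (u, φ) ::ₘ Γ) →
      SDer n k gR gG gS ((i, w, u) ::ₘ RA) IA ((w, SFml.adia i φ) ::ₘ Γ)
  | operr {RA : RAt n} {IA : DAt n} {Γ : SSeq n} {w u : ℕ} {i : Fin (n + 1)}
      {φ : SFml n} :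
      gG →
      SDer n k gR gG gS RA ((i, u) ::ₘ IA) ((w, SFml.per i φ) ::ₘ (u, φ) ::ₘ Γ) →
      SDer n k gR gG gS RA ((i, u) ::ₘ IA) ((w, SFml.per i φ) ::ₘ Γ)
  | refl {RA : RAt n} {IA : DAt n} {Γ : SSeq n} {w : ℕ} {i : Fin (n + 1)} :
      gG → SDer n k gR gG gS ((i, w, w) ::ₘ RA) IA Γ →
      SDer n k gR gG gS RA IA Γ
  | euc {RA : RAt n} {IA : DAt n} {Γ : SSeq n} {w u v : ℕ} {i : Fin (n + 1)} :
      gG →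
      SDer n k gR gG gS ((i, w, u) ::ₘ (i, w, v) ::ₘ (i, u, v) ::ₘ RA) IA Γ →
      SDer n k gR gG gS ((i, w, u) ::ₘ (i, w, v) ::ₘ RA) IA Γ
  | d2 {RA : RAt n} {IA : DAt n} {Γ : SSeq n} {u : ℕ} {i : Fin (n + 1)} :
      gG → ¬ soccurs u RA IA Γ →
      SDer n k gR gG gS RA ((i, u) ::ₘ IA) Γ →
      SDer n k gR gG gS RA IA Γ
  | d3 {RA : RAt n} {IA : DAt n} {Γ : SSeq n} {w u : ℕ} {i : Fin (n + 1)} :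
      gG →
      SDer n k gR gG gS ((i, w, u) ::ₘ RA) ((i, w) ::ₘ (i, u) ::ₘ IA) Γ →
      SDer n k gR gG gS ((i, w, u) ::ₘ RA) ((i, w) ::ₘ IA) Γ
  | subst {RA : RAt n} {IA : DAt n} {Γ : SSeq n} (w u : ℕ) :
      gS → SDer n k gR gG gS RA IA Γ →
      SDer n k gR gG gS (substRAt w u RA) (substDAt w u IA) (substSSeq w u Γ)
  | wk {RA RA' : RAt n} {IA IA' : DAt n} {Γ Γ' : SSeq n} :
      gS → SDer n k gR gG gS RA IA Γ →
      SDer n k gR gG gS (RA + RA') (IA + IA') (Γ + Γ')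
  | ctrR {RA : RAt n} {IA : DAt n} {Γ : SSeq n} (a : Fin (n + 1) × ℕ × ℕ) :
      gS → SDer n k gR gG gS (a ::ₘ a ::ₘ RA) IA Γ →
      SDer n k gR gG gS (a ::ₘ RA) IA Γ
  | ctrI {RA : RAt n} {IA : DAt n} {Γ : SSeq n} (b : Fin (n + 1) × ℕ) :
      gS → SDer n k gR gG gS RA (b ::ₘ b ::ₘ IA) Γ →
      SDer n k gR gG gS RA (b ::ₘ IA) Γ
  | ctrF {RA : RAt n} {IA : DAt n} {Γ : SSeq n} (w : ℕ) (φ : SFml n) :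
      gS → SDer n k gR gG gS RA IA ((w, φ) ::ₘ (w, φ) ::ₘ Γ) →
      SDer n k gR gG gS RA IA ((w, φ) ::ₘ Γ)
  | cut {RA : RAt n} {IA : DAt n} {Γ : SSeq n} (w : ℕ) (φ : SFml n) :
      gS → SDer n k gR gG gS RA IA ((w, φ) ::ₘ Γ) →
      SDer n k gR gG gS RA IA ((w, SFml.negnnf φ) ::ₘ Γ) →
      SDer n k gR gG gS RA IA Γ

/-- The labelled calculus `G3DS_n^k`. -/
abbrev G3DS (n k : ℕ) : RAt n → DAt n → SSeq n → Prop := SDer n k False True False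

/-- The refined labelled calculus `DS_n^k L`. -/
abbrev DSL (n k : ℕ) : RAt n → DAt n → SSeq n → Prop := SDer n k True False False

/-- The calculus `DS_n^k L + Str(DS)`. -/
abbrev DSLStr (n k : ℕ) : RAt n → DAt n → SSeq n → Prop := SDer n k True False True


/-! ### Paths, ideality, covering -/

theorem IPath.trans {n : ℕ} {RA : RAt n} {i : Fin (n + 1)} {a b c : ℕ}
    (h : IPath RA i a b) (hh : IPath RA i b c) : IPath RA i a c := by
  induction h with
  | refl _ => exact hh
  | fwd hm _ ih => exact IPath.fwd hm (ih hh)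
  | bwd hm _ ih => exact IPath.bwd hm (ih hh)

theorem IPath.symm {n : ℕ} {RA : RAt n} {i : Fin (n + 1)} {a b : ℕ}
    (h : IPath RA i a b) : IPath RA i b a := by
  induction h with
  | refl _ => exact IPath.refl _
  | fwd hm _ ih => exact ih.trans (IPath.bwd hm (IPath.refl _))
  | bwd hm _ ih => exact ih.trans (IPath.fwd hm (IPath.refl _))

theorem IPath.single {n : ℕ} {RA : RAt n} {i : Fin (n + 1)} {a b : ℕ}
    (h : (i, a, b) ∈ RA) : IPath RA i a b := IPath.fwd h (IPath.refl _)

theorem IPath.map {n : ℕ} {RA RA' : RAt n} {f : ℕ → ℕ}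
    (hf : ∀ i w u, (i, w, u) ∈ RA → IPath RA' i (f w) (f u))
    {i : Fin (n + 1)} {a b : ℕ} (h : IPath RA i a b) : IPath RA' i (f a) (f b) := by
  induction h with
  | refl _ => exact IPath.refl _
  | fwd hm _ ih => exact (hf _ _ _ hm).trans ih
  | bwd hm _ ih => exact (hf _ _ _ hm).symm.trans ih

/-- `x` is forced to be ideal for `i`. -/
def Ideal' {n : ℕ} (RA : RAt n) (IA : DAt n) (i : Fin (n + 1)) (x : ℕ) : Prop :=
  ∃ v, (i, v) ∈ IA ∧ IPath RA i v x

/-- A labelled formula is covered by a sequent: it occurs there, or it has already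
been decomposed there. -/
inductive Cov {n : ℕ} (RA : RAt n) (IA : DAt n) (Γ : SSeq n) : ℕ → SFml n → Prop
  | mem {w : ℕ} {φ : SFml n} : (w, φ) ∈ Γ → Cov RA IA Γ w φ
  | or {w : ℕ} {φ ψ : SFml n} : Cov RA IA Γ w φ → Cov RA IA Γ w ψ →
      Cov RA IA Γ w (SFml.or φ ψ)
  | andl {w : ℕ} {φ ψ : SFml n} : Cov RA IA Γ w φ → Cov RA IA Γ w (SFml.and φ ψ)
  | andr {w : ℕ} {φ ψ : SFml n} : Cov RA IA Γ w ψ → Cov RA IA Γ w (SFml.and φ ψ)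
  | box {w u : ℕ} {φ : SFml n} : Cov RA IA Γ u φ → Cov RA IA Γ w (SFml.box φ)
  | abox {w u : ℕ} {i : Fin (n + 1)} {φ : SFml n} : IPath RA i w u →
      Cov RA IA Γ u φ → Cov RA IA Γ w (SFml.abox i φ)
  | obl {w u : ℕ} {i : Fin (n + 1)} {φ : SFml n} : Ideal' RA IA i u →
      Cov RA IA Γ u φ → Cov RA IA Γ w (SFml.obl i φ)

/-- Simulation of one sequent by another along the relabelling `f`; ideality atoms
of agents in `J` are disregarded. -/
structure Sim {n : ℕ} (J : Fin (n + 1) → Prop) (f : ℕ → ℕ)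
    (RA : RAt n) (IA : DAt n) (Γ : SSeq n)
    (RA' : RAt n) (IA' : DAt n) (Γ' : SSeq n) : Prop where
  rc : ∀ i w u, (i, w, u) ∈ RA → IPath RA' i (f w) (f u)
  ic : ∀ i u, (i, u) ∈ IA → J i ∨ Ideal' RA' IA' i (f u)
  gc : ∀ w φ, (w, φ) ∈ Γ → Cov RA' IA' Γ' (f w) φ

/-- The second sequent extends the first one. -/
abbrev Ext {n : ℕ} (RA : RAt n) (IA : DAt n) (Γ : SSeq n)
    (RA' : RAt n) (IA' : DAt n) (Γ' : SSeq n) : Prop :=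
  Sim (fun _ => False) (fun x => x) RA IA Γ RA' IA' Γ'

section
variable {n : ℕ} {J : Fin (n + 1) → Prop} {f : ℕ → ℕ}
  {RA RA' RA'' : RAt n} {IA IA' IA'' : DAt n} {Γ Γ' Γ'' : SSeq n}

theorem Ideal'.mono (e : Ext RA IA Γ RA' IA' Γ') {i : Fin (n + 1)} {x : ℕ}
    (h : Ideal' RA IA i x) : Ideal' RA' IA' i x := by
  obtain ⟨v, hv, hp⟩ := h
  rcases e.ic _ _ hv with h | ⟨y, hy, hq⟩
  · exact h.elim
  · exact ⟨y, hy, hq.trans (hp.map e.rc)⟩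

theorem Cov.mono (e : Ext RA IA Γ RA' IA' Γ') {w : ℕ} {φ : SFml n}
    (h : Cov RA IA Γ w φ) : Cov RA' IA' Γ' w φ := by
  induction h with
  | mem hm => exact e.gc _ _ hm
  | or _ _ ih1 ih2 => exact Cov.or ih1 ih2
  | andl _ ih => exact Cov.andl ih
  | andr _ ih => exact Cov.andr ih
  | box _ ih => exact Cov.box ih
  | abox hp _ ih => exact Cov.abox (hp.map e.rc) ih
  | obl hi _ ih => exact Cov.obl (hi.mono e) ih

theorem Sim.mono (s : Sim J f RA IA Γ RA' IA' Γ') (e : Ext RA' IA' Γ' RA'' IA'' Γ'') :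
    Sim J f RA IA Γ RA'' IA'' Γ'' where
  rc i w u h := (s.rc i w u h).map e.rc
  ic i u h := (s.ic i u h).imp (fun h => h) (fun h => h.mono e)
  gc w φ h := (s.gc w φ h).mono e

theorem Sim.update (s : Sim J f RA IA Γ RA' IA' Γ') {u : ℕ} (hu : ¬ soccurs u RA IA Γ)
    (x : ℕ) : Sim J (Function.update f u x) RA IA Γ RA' IA' Γ' where
  rc i a b h := by
    have ha : a ≠ u := fun e => hu (Or.inl ⟨i, a, b, h, Or.inl e.symm⟩)
    have hb : b ≠ u := fun e => hu (Or.inl ⟨i, a, b, h, Or.inr e.symm⟩)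
    rw [Function.update_of_ne ha, Function.update_of_ne hb]
    exact s.rc i a b h
  ic i a h := by
    have ha : a ≠ u := by
      rintro rfl
      exact hu (Or.inr (Or.inl ⟨i, h⟩))
    rw [Function.update_of_ne ha]
    exact s.ic i a h
  gc a φ h := by
    have ha : a ≠ u := by
      rintro rfl
      exact hu (Or.inr (Or.inr ⟨φ, h⟩))
    rw [Function.update_of_ne ha]
    exact s.gc a φ h

theorem Sim.tail {a : ℕ × SFml n} (s : Sim J f RA IA (a ::ₘ Γ) RA' IA' Γ') :
    Sim J f RA IA Γ RA' IA' Γ' :=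
  ⟨s.rc, s.ic, fun w φ h => s.gc w φ (Multiset.mem_cons_of_mem h)⟩

theorem Sim.head {w : ℕ} {φ : SFml n} (s : Sim J f RA IA ((w, φ) ::ₘ Γ) RA' IA' Γ') :
    Cov RA' IA' Γ' (f w) φ := s.gc w φ (Multiset.mem_cons_self _ _)

theorem Sim.consF (s : Sim J f RA IA Γ RA' IA' Γ') {w : ℕ} {φ : SFml n}
    (h : Cov RA' IA' Γ' (f w) φ) : Sim J f RA IA ((w, φ) ::ₘ Γ) RA' IA' Γ' := by
  refine ⟨s.rc, s.ic, fun v ψ hm => ?_⟩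
  rcases Multiset.mem_cons.1 hm with hh | hh
  · cases hh; exact h
  · exact s.gc _ _ hh

theorem Sim.consR (s : Sim J f RA IA Γ RA' IA' Γ') {i : Fin (n + 1)} {w u : ℕ}
    (h : IPath RA' i (f w) (f u)) : Sim J f ((i, w, u) ::ₘ RA) IA Γ RA' IA' Γ' := by
  refine ⟨fun j a b hm => ?_, s.ic, s.gc⟩
  rcases Multiset.mem_cons.1 hm with hh | hh
  · cases hh; exact h
  · exact s.rc _ _ _ hh

theorem Sim.consI (s : Sim J f RA IA Γ RA' IA' Γ') {i : Fin (n + 1)} {u : ℕ}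
    (h : J i ∨ Ideal' RA' IA' i (f u)) : Sim J f RA ((i, u) ::ₘ IA) Γ RA' IA' Γ' := by
  refine ⟨s.rc, fun j a hm => ?_, s.gc⟩
  rcases Multiset.mem_cons.1 hm with hh | hh
  · cases hh; exact h
  · exact s.ic _ _ hh

/-- Extension by atoms and side formulas. -/
theorem Ext.of_subset (hR : RA ⊆ RA') (hI : IA ⊆ IA') (hG : Γ ⊆ Γ') :
    Ext RA IA Γ RA' IA' Γ' where
  rc _ _ _ h := IPath.single (hR h)
  ic _ u h := Or.inr ⟨u, hI h, IPath.refl _⟩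
  gc _ _ h := Cov.mem (hG h)

theorem Sim.refl : Ext RA IA Γ RA IA Γ :=
  Ext.of_subset (fun _ h => h) (fun _ h => h) (fun _ h => h)

end

theorem exists_fresh {n : ℕ} (RA : RAt n) (IA : DAt n) (Γ : SSeq n) :
    ∃ u, ¬ soccurs u RA IA Γ := by
  obtain ⟨u, hu⟩ := Infinite.exists_notMem_finset
    ((RA.map fun t => t.2.1) + (RA.map fun t => t.2.2) + (IA.map fun t => t.2)
      + (Γ.map fun t => t.1)).toFinset
  refine ⟨u, fun h => hu ?_⟩
  simp only [Multiset.mem_toFinset, Multiset.mem_add, Multiset.mem_map]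
  rcases h with ⟨i, w, v, hm, rfl | rfl⟩ | ⟨i, hm⟩ | ⟨φ, hm⟩
  · exact Or.inl (Or.inl (Or.inl ⟨_, hm, rfl⟩))
  · exact Or.inl (Or.inl (Or.inr ⟨_, hm, rfl⟩))
  · exact Or.inl (Or.inr ⟨_, hm, rfl⟩)
  · exact Or.inr ⟨_, hm, rfl⟩

/-- Master structural lemma: simulated sequents of derivable ones are derivable. -/
theorem dsl_sim {n k : ℕ} (J : Fin (n + 1) → Prop) (E : RAt n → DAt n → SSeq n → Prop)
    (hE : ∀ RA IA Γ RA' IA' Γ', E RA IA Γ → Ext RA IA Γ RA' IA' Γ' → E RA' IA' Γ')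
    (hJ : ∀ RA IA Γ i w φ, E RA IA Γ → J i → (w, SFml.per i φ) ∈ Γ → DSL n k RA IA Γ)
    {RA : RAt n} {IA : DAt n} {Γ : SSeq n} (h : DSL n k RA IA Γ) :
    ∀ (f : ℕ → ℕ) (RA' : RAt n) (IA' : DAt n) (Γ' : SSeq n),
      E RA' IA' Γ' → Sim J f RA IA Γ RA' IA' Γ' → DSL n k RA' IA' Γ' := by
  induction h with
  | id RA IA Γ w p =>
    intro f RA' IA' Γ' _ s
    cases s.head with
    | mem h1 =>
      cases s.tail.head with
      | mem h2 =>
        obtain ⟨Δ, rfl⟩ := Multiset.exists_cons_of_mem h1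
        rcases Multiset.mem_cons.1 h2 with h3 | h3
        · cases h3
        · obtain ⟨Δ, rfl⟩ := Multiset.exists_cons_of_mem h3
          exact SDer.id _ _ _ _ _
  | @orr _ _ _ w φ ψ _ ih =>
    intro f RA' IA' Γ' hE' s
    cases s.head with
    | mem h1 =>
      obtain ⟨Δ, rfl⟩ := Multiset.exists_cons_of_mem h1
      refine SDer.orr ?_
      have e : Ext RA' IA' Δ RA' IA' ((f w, φ) ::ₘ (f w, ψ) ::ₘ Δ) :=
        Ext.of_subset (fun _ h => h) (fun _ h => h) (fun _ h => by simp [h])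
      have e2 : Ext RA' IA' ((f w, SFml.or φ ψ) ::ₘ Δ) _ _ _ :=
        Sim.consF e (Cov.or (Cov.mem (by simp)) (Cov.mem (by simp)))
      refine ih f _ _ _ (hE _ _ _ _ _ _ hE' e2)
        (((s.tail.mono e2).consF (Cov.mem ?_)).consF (Cov.mem ?_)) <;> simp
    | or h1 h2 => exact ih f _ _ _ hE' ((s.tail.consF h2).consF h1)
  | @andr _ _ _ w φ ψ _ _ ih1 ih2 =>
    intro f RA' IA' Γ' hE' s
    cases s.head with
    | mem h1 =>
      obtain ⟨Δ, rfl⟩ := Multiset.exists_cons_of_mem h1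
      refine SDer.andr ?_ ?_
      · have e : Ext RA' IA' Δ RA' IA' ((f w, φ) ::ₘ Δ) :=
          Ext.of_subset (fun _ h => h) (fun _ h => h) (fun _ h => by simp [h])
        have e2 : Ext RA' IA' ((f w, SFml.and φ ψ) ::ₘ Δ) _ _ _ :=
          Sim.consF e (Cov.andl (Cov.mem (by simp)))
        refine ih1 f _ _ _ (hE _ _ _ _ _ _ hE' e2) ((s.tail.mono e2).consF (Cov.mem ?_))
        simp
      · have e : Ext RA' IA' Δ RA' IA' ((f w, ψ) ::ₘ Δ) :=
          Ext.of_subset (fun _ h => h) (fun _ h => h) (fun _ h => by simp [h])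
        have e2 : Ext RA' IA' ((f w, SFml.and φ ψ) ::ₘ Δ) _ _ _ :=
          Sim.consF e (Cov.andr (Cov.mem (by simp)))
        refine ih2 f _ _ _ (hE _ _ _ _ _ _ hE' e2) ((s.tail.mono e2).consF (Cov.mem ?_))
        simp
    | andl h1 => exact ih1 f _ _ _ hE' (s.tail.consF h1)
    | andr h1 => exact ih2 f _ _ _ hE' (s.tail.consF h1)
  | @diar _ _ _ w u φ _ ih =>
    intro f RA' IA' Γ' hE' s
    cases s.head with
    | mem h1 =>
      obtain ⟨Δ, rfl⟩ := Multiset.exists_cons_of_mem h1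
      refine SDer.diar (u := f u) ?_
      have e : Ext RA' IA' ((f w, SFml.dia φ) ::ₘ Δ) RA' IA'
          ((f w, SFml.dia φ) ::ₘ (f u, φ) ::ₘ Δ) :=
        Ext.of_subset (fun _ h => h) (fun _ h => h)
          (Multiset.cons_subset_cons (Multiset.subset_cons _ _))
      refine ih f _ _ _ (hE _ _ _ _ _ _ hE' e)
        (((s.tail.mono e).consF (Cov.mem ?_)).consF (Cov.mem ?_)) <;> simp
  | @boxr _ _ _ w u φ hu _ ih =>
    intro f RA' IA' Γ' hE' s
    cases s.head with
    | mem h1 =>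
      obtain ⟨Δ, rfl⟩ := Multiset.exists_cons_of_mem h1
      obtain ⟨x, hx⟩ := exists_fresh RA' IA' ((f w, SFml.box φ) ::ₘ Δ)
      refine SDer.boxr hx ?_
      have e : Ext RA' IA' Δ RA' IA' ((x, φ) ::ₘ Δ) :=
        Ext.of_subset (fun _ h => h) (fun _ h => h) (fun _ h => by simp [h])
      have e2 : Ext RA' IA' ((f w, SFml.box φ) ::ₘ Δ) _ _ _ :=
        Sim.consF e (Cov.box (u := x) (Cov.mem (by simp)))
      refine ih (Function.update f u x) _ _ _ (hE _ _ _ _ _ _ hE' e2)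
        (((s.update hu x).tail.mono e2).consF (Cov.mem ?_))
      simp
    | @box _ x _ h1 =>
      refine ih (Function.update f u x) _ _ _ hE' ((s.update hu x).tail.consF ?_)
      simpa using h1
  | @aboxr _ _ _ w u i φ hu _ ih =>
    intro f RA' IA' Γ' hE' s
    have hw : w ≠ u := by
      rintro rfl
      exact hu (Or.inr (Or.inr ⟨SFml.abox i φ, by simp⟩))
    cases s.head with
    | mem h1 =>
      obtain ⟨Δ, rfl⟩ := Multiset.exists_cons_of_mem h1
      obtain ⟨x, hx⟩ := exists_fresh RA' IA' ((f w, SFml.abox i φ) ::ₘ Δ)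
      refine SDer.aboxr hx ?_
      have e : Ext RA' IA' Δ ((i, f w, x) ::ₘ RA') IA' ((x, φ) ::ₘ Δ) :=
        Ext.of_subset (Multiset.subset_cons _ _) (fun _ h => h) (Multiset.subset_cons _ _)
      have e2 : Ext RA' IA' ((f w, SFml.abox i φ) ::ₘ Δ) _ _ _ :=
        Sim.consF e (Cov.abox (u := x) (IPath.single (by simp)) (Cov.mem (by simp)))
      refine ih (Function.update f u x) _ _ _ (hE _ _ _ _ _ _ hE' e2)
        ((((s.update hu x).tail.mono e2).consF (Cov.mem ?_)).consR (IPath.single ?_))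
      · simp
      · simp [hw]
    | @abox _ x _ _ hp h1 =>
      refine ih (Function.update f u x) _ _ _ hE'
        (((s.update hu x).tail.consF ?_).consR ?_)
      · simpa using h1
      · simpa [hw] using hp
  | @oblr _ _ _ w u i φ hu _ ih =>
    intro f RA' IA' Γ' hE' s
    cases s.head with
    | mem h1 =>
      obtain ⟨Δ, rfl⟩ := Multiset.exists_cons_of_mem h1
      obtain ⟨x, hx⟩ := exists_fresh RA' IA' ((f w, SFml.obl i φ) ::ₘ Δ)
      refine SDer.oblr hx ?_
      have e : Ext RA' IA' Δ RA' ((i, x) ::ₘ IA') ((x, φ) ::ₘ Δ) :=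
        Ext.of_subset (fun _ h => h) (Multiset.subset_cons _ _) (Multiset.subset_cons _ _)
      have hid : Ideal' RA' ((i, x) ::ₘ IA') i x := ⟨x, by simp, IPath.refl _⟩
      have e2 : Ext RA' IA' ((f w, SFml.obl i φ) ::ₘ Δ) _ _ _ :=
        Sim.consF e (Cov.obl (u := x) hid (Cov.mem (by simp)))
      refine ih (Function.update f u x) _ _ _ (hE _ _ _ _ _ _ hE' e2)
        ((((s.update hu x).tail.mono e2).consF (Cov.mem ?_)).consI (Or.inr ?_))
      · simp
      · simpa using hid
    | @obl _ x _ _ hp h1 =>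
      refine ih (Function.update f u x) _ _ _ hE'
        (((s.update hu x).tail.consF ?_).consI (Or.inr ?_))
      · simpa using h1
      · simpa using hp
  | @ioa RA IA Γ ws u hu _ ih =>
    intro f RA' IA' Γ' hE' s
    obtain ⟨x, hx⟩ := exists_fresh RA' IA' Γ'
    refine SDer.ioa (fun i => Function.update f u x (ws i)) x hx ?_
    have e : Ext RA' IA' Γ'
        ((Finset.univ.val.map fun i => (i, Function.update f u x (ws i), x)) + RA') IA' Γ' :=
      Ext.of_subset (fun _ h => Multiset.mem_add.2 (Or.inr h)) (fun _ h => h) (fun _ h => h)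
    have s' := (s.update hu x).mono e
    refine ih (Function.update f u x) _ _ _ (hE _ _ _ _ _ _ hE' e) ⟨?_, s'.ic, s'.gc⟩
    intro j a b hm
    rcases Multiset.mem_add.1 hm with h1 | h1
    · obtain ⟨i, _, hi⟩ := Multiset.mem_map.1 h1
      cases hi
      refine IPath.single (Multiset.mem_add.2 (Or.inl (Multiset.mem_map.2 ⟨j, ?_, ?_⟩)))
      · simp
      · simp
    · exact s'.rc _ _ _ h1
  | apc hk i ws _ ih =>
    intro f RA' IA' Γ' hE' s
    refine SDer.apc hk i (fun m => f (ws m)) fun m j hmj => ?_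
    have e : Ext RA' IA' Γ' ((i, f (ws m), f (ws j)) ::ₘ RA') IA' Γ' :=
      Ext.of_subset (Multiset.subset_cons _ _) (fun _ h => h) (fun _ h => h)
    exact ih m j hmj f _ _ _ (hE _ _ _ _ _ _ hE' e)
      ((s.mono e).consR (IPath.single (Multiset.mem_cons_self _ _)))
  | @prAdia _ _ _ u v i φ _ hp _ ih =>
    intro f RA' IA' Γ' hE' s
    cases s.head with
    | mem h1 =>
      obtain ⟨Δ, rfl⟩ := Multiset.exists_cons_of_mem h1
      refine SDer.prAdia trivial (hp.map s.rc) ?_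
      have e : Ext RA' IA' ((f u, SFml.adia i φ) ::ₘ Δ) RA' IA'
          ((f u, SFml.adia i φ) ::ₘ (f v, φ) ::ₘ Δ) :=
        Ext.of_subset (fun _ h => h) (fun _ h => h)
          (Multiset.cons_subset_cons (Multiset.subset_cons _ _))
      refine ih f _ _ _ (hE _ _ _ _ _ _ hE' e)
        (((s.tail.mono e).consF (Cov.mem ?_)).consF (Cov.mem ?_)) <;> simp
  | @prPer1 _ _ _ w u v i φ _ hp _ ih =>
    intro f RA' IA' Γ' hE' s
    cases s.head with
    | mem h1 =>
      rcases s.ic i u (Multiset.mem_cons_self _ _) with hj | ⟨y, hy, hq⟩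
      · exact hJ _ _ _ _ _ _ hE' hj h1
      obtain ⟨Δ, rfl⟩ := Multiset.exists_cons_of_mem h1
      obtain ⟨IB, rfl⟩ := Multiset.exists_cons_of_mem hy
      refine SDer.prPer1 trivial (hq.trans (hp.map s.rc)) ?_
      have e : Ext RA' ((i, y) ::ₘ IB) ((f w, SFml.per i φ) ::ₘ Δ) RA' ((i, y) ::ₘ IB)
          ((f w, SFml.per i φ) ::ₘ (f v, φ) ::ₘ Δ) :=
        Ext.of_subset (fun _ h => h) (fun _ h => h)
          (Multiset.cons_subset_cons (Multiset.subset_cons _ _))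
      refine ih f _ _ _ (hE _ _ _ _ _ _ hE' e)
        (((s.tail.mono e).consF (Cov.mem ?_)).consF (Cov.mem ?_)) <;> simp
  | @prPer2 _ _ _ w u i φ _ hu _ ih =>
    intro f RA' IA' Γ' hE' s
    have hw : w ≠ u := by
      rintro rfl
      exact hu (Or.inr (Or.inr ⟨SFml.per i φ, by simp⟩))
    cases s.head with
    | mem h1 =>
      obtain ⟨Δ, rfl⟩ := Multiset.exists_cons_of_mem h1
      obtain ⟨x, hx⟩ := exists_fresh RA' IA' ((f w, SFml.per i φ) ::ₘ Δ)
      refine SDer.prPer2 trivial hx ?_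
      have e : Ext RA' IA' ((f w, SFml.per i φ) ::ₘ Δ) RA' ((i, x) ::ₘ IA')
          ((f w, SFml.per i φ) ::ₘ (x, φ) ::ₘ Δ) :=
        Ext.of_subset (fun _ h => h) (Multiset.subset_cons _ _)
          (Multiset.cons_subset_cons (Multiset.subset_cons _ _))
      have hid : Ideal' RA' ((i, x) ::ₘ IA') i x := ⟨x, by simp, IPath.refl _⟩
      refine ih (Function.update f u x) _ _ _ (hE _ _ _ _ _ _ hE' e)
        (((((s.update hu x).tail.mono e).consF (Cov.mem ?_)).consF (Cov.mem ?_)).consI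
          (Or.inr ?_))
      · simp
      · simp [hw]
      · simpa using hid
  | adiar h => exact h.elim
  | operr h => exact h.elim
  | refl h => exact h.elim
  | euc h => exact h.elim
  | d2 h => exact h.elim
  | d3 h => exact h.elim
  | subst _ _ h => exact h.elim
  | wk h => exact h.elim
  | ctrR _ h => exact h.elim
  | ctrI _ h => exact h.elim
  | ctrF _ _ h => exact h.elim
  | cut _ _ h => exact h.elim

/-- Admissible renaming, weakening, contraction, inversion, and elimination of
`(ref_i)`, `(euc_i)`, `(D3^i)` in `DS_n^k L`. -/
theorem dsl_struct {n k : ℕ} {RA RA' : RAt n} {IA IA' : DAt n} {Γ Γ' : SSeq n}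
    (f : ℕ → ℕ) (h : DSL n k RA IA Γ)
    (s : Sim (fun _ => False) f RA IA Γ RA' IA' Γ') : DSL n k RA' IA' Γ' :=
  dsl_sim (fun _ => False) (fun _ _ _ => True) (fun _ _ _ _ _ _ _ _ => trivial)
    (fun _ _ _ _ _ _ _ h _ => h.elim) h f _ _ _ trivial s

/-- Admissibility of `(D2^i)` in `DS_n^k L`. -/
theorem dsl_d2 {n k : ℕ} {RA : RAt n} {IA : DAt n} {Γ : SSeq n} {u : ℕ} {i : Fin (n + 1)}
    (hu : ¬ soccurs u RA IA Γ) (h : DSL n k RA ((i, u) ::ₘ IA) Γ) : DSL n k RA IA Γ := by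
  refine dsl_sim (fun j => j = i) (Ext RA IA Γ)
    (fun _ _ _ _ _ _ h1 h2 => h1.mono h2) ?_ h (fun x => x) _ _ _ Sim.refl ?_
  · rintro RA' IA' Γ' j w φ e rfl hm
    obtain ⟨Δ, rfl⟩ := Multiset.exists_cons_of_mem hm
    obtain ⟨x, hx⟩ := exists_fresh RA' IA' ((w, SFml.per j φ) ::ₘ Δ)
    refine SDer.prPer2 trivial hx ?_
    have e2 : Ext RA' IA' ((w, SFml.per j φ) ::ₘ Δ) RA' ((j, x) ::ₘ IA')
        ((w, SFml.per j φ) ::ₘ (x, φ) ::ₘ Δ) :=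
      Ext.of_subset (fun _ h => h) (Multiset.subset_cons _ _)
        (Multiset.cons_subset_cons (Multiset.subset_cons _ _))
    refine dsl_struct (Function.update (fun x => x) u x) h
      (((e.update hu x).mono e2).consI (Or.inr ⟨x, by simp, ?_⟩))
    simpa using IPath.refl x
  · have r : Ext RA IA Γ RA IA Γ := Sim.refl
    exact Sim.consI ⟨r.rc, fun j a h => Or.inr ((r.ic j a h).resolve_left fun h => h), r.gc⟩
      (Or.inl rfl)

/-- For all `n, k ∈ ℕ`, every labelled sequent derivable in
the labelled calculus `G3DS_n^k` is derivable in the refined labelled calculus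
`DS_n^k L`. -/
theorem g3DS_to_dsl (n k : ℕ) (RA : RAt n) (IA : DAt n) (Γ : SSeq n)
    (h : G3DS n k RA IA Γ) : DSL n k RA IA Γ := by
  induction h with
  | id RA IA Γ w p => exact SDer.id _ _ _ _ _
  | orr _ ih => exact SDer.orr ih
  | andr _ _ ih1 ih2 => exact SDer.andr ih1 ih2
  | diar _ ih => exact SDer.diar ih
  | boxr hu _ ih => exact SDer.boxr hu ih
  | aboxr hu _ ih => exact SDer.aboxr hu ih
  | oblr hu _ ih => exact SDer.oblr hu ih
  | ioa ws u hu _ ih => exact SDer.ioa ws u hu ih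
  | apc hk i ws _ ih => exact SDer.apc hk i ws ih
  | prAdia h => exact h.elim
  | prPer1 h => exact h.elim
  | prPer2 h => exact h.elim
  | adiar _ _ ih => exact SDer.prAdia trivial (IPath.single (Multiset.mem_cons_self _ _)) ih
  | operr _ _ ih => exact SDer.prPer1 trivial (IPath.refl _) ih
  | refl _ _ ih => exact dsl_struct (fun x => x) ih (Sim.consR Sim.refl (IPath.refl _))
  | @euc RA IA Γ w u v i _ _ ih =>
    have p1 : IPath ((i, w, u) ::ₘ (i, w, v) ::ₘ RA) i w u := IPath.single (by simp)
    have p2 : IPath ((i, w, u) ::ₘ (i, w, v) ::ₘ RA) i w v := IPath.single (by simp)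
    have e : Ext RA IA Γ ((i, w, u) ::ₘ (i, w, v) ::ₘ RA) IA Γ :=
      Ext.of_subset (fun _ h => by simp [h]) (fun _ h => h) (fun _ h => h)
    exact dsl_struct (fun x => x) ih
      (((e.consR (p1.symm.trans p2)).consR p2).consR p1)
  | d2 _ hu _ ih => exact dsl_d2 hu ih
  | @d3 RA IA Γ w u i _ _ ih =>
    have e : Ext ((i, w, u) ::ₘ RA) IA Γ ((i, w, u) ::ₘ RA) ((i, w) ::ₘ IA) Γ :=
      Ext.of_subset (fun _ h => h) (Multiset.subset_cons _ _) (fun _ h => h)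
    exact dsl_struct (fun x => x) ih
      ((e.consI (Or.inr ⟨w, by simp, IPath.single (by simp)⟩)).consI
        (Or.inr ⟨w, by simp, IPath.refl _⟩))
  | subst _ _ h => exact h.elim
  | wk h => exact h.elim
  | ctrR _ h => exact h.elim
  | ctrI _ h => exact h.elim
  | ctrF _ _ h => exact h.elim
  | cut _ _ h => exact h.elim

end DeonticStit
end

section
/- For all n, k ∈ ℕ, every labelled sequent derivable in DS_n^k L + Str(DS) (i.e. DS_n^k L extended with label substitution, weakening, contraction of relational and deontic atoms, contraction of labelled formulae, and cut) is derivable in G3DS_n^k. -/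
/-!
Labelled sequent calculi for deontic STIT logics `DS_n^k`.
-/

namespace DeonticStit

/-! ### Semantics -/

/-- Models for the logic. -/
structure Mdl (n k : ℕ) (W : Type) where
  R : Fin (n + 1) → W → W → Prop
  I : Fin (n + 1) → W → Prop
  V : ℕ → W → Prop
  rfl' : ∀ i w, R i w w
  euc' : ∀ i w u v, R i w u → R i w v → R i u v
  ioa' : ∀ ws : Fin (n + 1) → W, ∃ u, ∀ i, R i (ws i) u
  apc' : 0 < k → ∀ i, ∀ ws : Fin (k + 1) → W, ∃ m j : Fin (k + 1), (m : ℕ) < j ∧ R i (ws m) (ws j)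
  d2' : ∀ i, ∃ u, I i u
  d3' : ∀ i w u, R i w u → I i w → I i u

def Mdl.sat {n k : ℕ} {W : Type} (M : Mdl n k W) : W → SFml n → Prop
  | w, .pos p => M.V p w
  | w, .neg p => ¬ M.V p w
  | w, .or φ ψ => M.sat w φ ∨ M.sat w ψ
  | w, .and φ ψ => M.sat w φ ∧ M.sat w ψ
  | _, .box φ => ∀ u, M.sat u φ
  | _, .dia φ => ∃ u, M.sat u φ
  | w, .abox i φ => ∀ u, M.R i w u → M.sat u φ
  | w, .adia i φ => ∃ u, M.R i w u ∧ M.sat u φ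
  | _, .obl i φ => ∀ u, M.I i u → M.sat u φ
  | _, .per i φ => ∃ u, M.I i u ∧ M.sat u φ

theorem Mdl.sym {n k : ℕ} {W : Type} (M : Mdl n k W) {i w u} (h : M.R i w u) : M.R i u w :=
  M.euc' i w u w h (M.rfl' i w)

theorem Mdl.trans {n k : ℕ} {W : Type} (M : Mdl n k W) {i w u v} (h : M.R i w u)
    (h' : M.R i u v) : M.R i w v := M.euc' i u w v (M.sym h) h'

theorem Mdl.sat_neg {n k : ℕ} {W : Type} (M : Mdl n k W) (φ : SFml n) :
    ∀ w, M.sat w φ.negnnf ↔ ¬ M.sat w φ := by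
  induction φ <;> intro w <;> simp_all [Mdl.sat, SFml.negnnf] <;> tauto

/-- A sequent is refuted by an assignment of labels. -/
def Refutes {n k : ℕ} {W : Type} (M : Mdl n k W) (σ : ℕ → W) (RA : RAt n) (IA : DAt n)
    (Γ : SSeq n) : Prop :=
  (∀ i w u, (i, w, u) ∈ RA → M.R i (σ w) (σ u)) ∧ (∀ i u, (i, u) ∈ IA → M.I i (σ u)) ∧
    ∀ w φ, (w, φ) ∈ Γ → ¬ M.sat (σ w) φ

theorem Refutes.update {n k : ℕ} {W : Type} {M : Mdl n k W} {σ : ℕ → W} {RA : RAt n} {IA : DAt n}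
    {Γ : SSeq n} (h : Refutes M σ RA IA Γ) {u : ℕ} (hu : ¬ soccurs u RA IA Γ) (x : W) :
    Refutes M (Function.update σ u x) RA IA Γ := by
  simp only [soccurs, not_or, not_exists, not_and] at hu
  obtain ⟨h1, h2, h3⟩ := hu
  refine ⟨fun i a b hab => ?_, fun i a ha => ?_, fun a φ ha => ?_⟩
  · have := h1 i a b hab
    rw [Function.update_of_ne (Ne.symm this.1), Function.update_of_ne (Ne.symm this.2)]
    exact h.1 i a b hab
  · rw [Function.update_of_ne (by rintro rfl; exact h2 i ha)]
    exact h.2.1 i a ha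
  · rw [Function.update_of_ne (by rintro rfl; exact h3 φ ha)]
    exact h.2.2 a φ ha

theorem IPath.rel {n k : ℕ} {W : Type} {M : Mdl n k W} {σ : ℕ → W} {RA : RAt n}
    (h : ∀ i w u, (i, w, u) ∈ RA → M.R i (σ w) (σ u)) {i w u} (p : IPath RA i w u) :
    M.R i (σ w) (σ u) := by
  induction p with
  | refl w => exact M.rfl' _ _
  | fwd h1 _ ih => exact M.trans (h _ _ _ h1) ih
  | bwd h1 _ ih => exact M.trans (M.sym (h _ _ _ h1)) ih

section cons
variable {n k : ℕ} {W : Type} {M : Mdl n k W} {σ : ℕ → W} {RA : RAt n} {IA : DAt n} {Γ : SSeq n}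

theorem ref_F {w : ℕ} {φ : SFml n} : Refutes M σ RA IA ((w, φ) ::ₘ Γ) ↔
    ¬ M.sat (σ w) φ ∧ Refutes M σ RA IA Γ := by
  simp only [Refutes, Multiset.mem_cons, Prod.mk.injEq]
  constructor
  · rintro ⟨a, b, c⟩
    exact ⟨c _ _ (.inl ⟨rfl, rfl⟩), a, b, fun _ _ h => c _ _ (.inr h)⟩
  · rintro ⟨d, a, b, c⟩
    exact ⟨a, b, by rintro _ _ (⟨rfl, rfl⟩ | h); exacts [d, c _ _ h]⟩

theorem ref_R {i : Fin (n + 1)} {w u : ℕ} : Refutes M σ ((i, w, u) ::ₘ RA) IA Γ ↔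
    M.R i (σ w) (σ u) ∧ Refutes M σ RA IA Γ := by
  simp only [Refutes, Multiset.mem_cons, Prod.mk.injEq]
  constructor
  · rintro ⟨a, b, c⟩
    exact ⟨a _ _ _ (.inl ⟨rfl, rfl, rfl⟩), fun _ _ _ h => a _ _ _ (.inr h), b, c⟩
  · rintro ⟨d, a, b, c⟩
    exact ⟨by rintro _ _ _ (⟨rfl, rfl, rfl⟩ | h); exacts [d, a _ _ _ h], b, c⟩

theorem ref_I {i : Fin (n + 1)} {u : ℕ} : Refutes M σ RA ((i, u) ::ₘ IA) Γ ↔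
    M.I i (σ u) ∧ Refutes M σ RA IA Γ := by
  simp only [Refutes, Multiset.mem_cons, Prod.mk.injEq]
  constructor
  · rintro ⟨a, b, c⟩
    exact ⟨b _ _ (.inl ⟨rfl, rfl⟩), a, fun _ _ h => b _ _ (.inr h), c⟩
  · rintro ⟨d, a, b, c⟩
    exact ⟨a, by rintro _ _ (⟨rfl, rfl⟩ | h); exacts [d, b _ _ h], c⟩
end cons

theorem sound {n k : ℕ} {gR gG gS : Prop} {RA : RAt n} {IA : DAt n} {Γ : SSeq n}
    (h : SDer n k gR gG gS RA IA Γ) {W : Type} (M : Mdl n k W) :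
    ∀ σ : ℕ → W, ¬ Refutes M σ RA IA Γ := by
  induction h with
  | id RA IA Γ w p =>
    intro σ hr
    simp only [ref_F, Mdl.sat] at hr
    tauto
  | orr _ ih => intro σ hr; apply ih σ; simp only [ref_F, Mdl.sat] at hr ⊢; tauto
  | andr _ _ ih1 ih2 =>
    intro σ hr
    have h1 := ih1 σ
    have h2 := ih2 σ
    simp only [ref_F, Mdl.sat] at hr h1 h2
    tauto
  | @diar RA IA Γ w u φ _ ih =>
    intro σ hr
    apply ih σ
    simp only [ref_F, Mdl.sat] at hr ⊢
    exact ⟨hr.1, fun h => hr.1 ⟨_, h⟩, hr.2⟩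
  | @boxr RA IA Γ w u φ hf _ ih =>
    intro σ hr
    obtain ⟨x, hx⟩ := not_forall.1 (ref_F.1 hr).1
    apply ih (Function.update σ u x)
    have := ref_F.1 (hr.update hf x)
    exact ref_F.2 ⟨by simpa using hx, this.2⟩
  | @aboxr RA IA Γ w u i φ hf _ ih =>
    intro σ hr
    have h1 := (ref_F.1 hr).1
    simp only [Mdl.sat, not_forall] at h1
    obtain ⟨x, hx, hs⟩ := h1
    apply ih (Function.update σ u x)
    have := ref_F.1 (hr.update hf x)
    have hw : w ≠ u := by
      rintro rfl
      exact hf (.inr (.inr ⟨_, Multiset.mem_cons_self _ _⟩))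
    exact ref_R.2 ⟨by simpa [Function.update_of_ne hw] using hx,
      ref_F.2 ⟨by simpa using hs, this.2⟩⟩
  | @oblr RA IA Γ w u i φ hf _ ih =>
    intro σ hr
    have h1 := (ref_F.1 hr).1
    simp only [Mdl.sat, not_forall] at h1
    obtain ⟨x, hx, hs⟩ := h1
    apply ih (Function.update σ u x)
    have := ref_F.1 (hr.update hf x)
    exact ref_I.2 ⟨by simpa using hx, ref_F.2 ⟨by simpa using hs, this.2⟩⟩
  | @ioa RA IA Γ ws u hf _ ih =>
    intro σ hr
    classical
    by_cases hc : ∃ x, ∀ i, M.R i (Function.update σ u x (ws i)) x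
    · obtain ⟨x, hx⟩ := hc
      apply ih (Function.update σ u x)
      obtain ⟨a, b, c⟩ := hr.update hf x
      refine ⟨fun i w v hm => ?_, b, c⟩
      rcases Multiset.mem_add.1 hm with h | h
      · obtain ⟨j, -, hj⟩ := Multiset.mem_map.1 h
        cases hj
        simpa using hx i
      · exact a _ _ _ h
    · apply hc
      obtain ⟨x, hx⟩ := M.ioa' (fun i => σ (ws i))
      refine ⟨x, fun i => ?_⟩
      by_cases hw : ws i = u
      · rw [hw, Function.update_self]; exact M.rfl' _ _
      · rw [Function.update_of_ne hw]; exact hx i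
  | apc hk i ws _ ih =>
    intro σ hr
    obtain ⟨m, j, hmj, hR⟩ := M.apc' hk i (fun a => σ (ws a))
    exact ih m j hmj σ (ref_R.2 ⟨hR, hr⟩)
  | prAdia _ hp _ ih =>
    intro σ hr
    apply ih σ
    have hR := hp.rel hr.1
    simp only [ref_F, Mdl.sat] at hr ⊢
    exact ⟨hr.1, fun h => hr.1 ⟨_, hR, h⟩, hr.2⟩
  | prPer1 _ hp _ ih =>
    intro σ hr
    apply ih σ
    have hR := hp.rel hr.1
    simp only [ref_F, ref_I, Mdl.sat] at hr ⊢
    exact ⟨hr.1, fun h => hr.1 ⟨_, M.d3' _ _ _ hR hr.2.1, h⟩, hr.2⟩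
  | @prPer2 RA IA Γ w u i φ _ hf _ ih =>
    intro σ hr
    obtain ⟨x, hx⟩ := M.d2' i
    apply ih (Function.update σ u x)
    have := ref_F.1 (hr.update hf x)
    refine ref_I.2 ⟨by simpa using hx, ref_F.2 ⟨this.1, ref_F.2 ⟨?_, this.2⟩⟩⟩
    intro hs
    exact this.1 ⟨_, by simpa using hx, hs⟩
  | adiar _ _ ih =>
    intro σ hr
    apply ih σ
    simp only [ref_F, ref_R, Mdl.sat] at hr ⊢
    exact ⟨hr.1, fun h => hr.1 ⟨_, hr.2.1, h⟩, hr.2⟩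
  | operr _ _ ih =>
    intro σ hr
    apply ih σ
    simp only [ref_F, ref_I, Mdl.sat] at hr ⊢
    exact ⟨hr.1, fun h => hr.1 ⟨_, hr.2.1, h⟩, hr.2⟩
  | refl _ _ ih => intro σ hr; exact ih σ (ref_R.2 ⟨M.rfl' _ _, hr⟩)
  | euc _ _ ih =>
    intro σ hr
    apply ih σ
    simp only [ref_R] at hr ⊢
    exact ⟨hr.1, hr.2.1, M.euc' _ _ _ _ hr.1 hr.2.1, hr.2.2⟩
  | @d2 RA IA Γ u i _ hf _ ih =>
    intro σ hr
    obtain ⟨x, hx⟩ := M.d2' i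
    exact ih (Function.update σ u x) (ref_I.2 ⟨by simpa using hx, hr.update hf x⟩)
  | d3 _ _ ih =>
    intro σ hr
    apply ih σ
    simp only [ref_R, ref_I] at hr ⊢
    exact ⟨hr.1, M.d3' _ _ _ hr.2.1 hr.1, hr.2⟩
  | subst w u _ _ ih =>
    intro σ hr
    apply ih (fun v => σ (substLbl w u v))
    obtain ⟨a, b, c⟩ := hr
    exact ⟨fun i x y h => a i _ _ (Multiset.mem_map.2 ⟨_, h, rfl⟩),
      fun i x h => b i _ (Multiset.mem_map.2 ⟨_, h, rfl⟩),
      fun x φ h => c _ φ (Multiset.mem_map.2 ⟨_, h, rfl⟩)⟩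
  | wk _ _ ih =>
    intro σ hr
    obtain ⟨a, b, c⟩ := hr
    exact ih σ ⟨fun i x y h => a i _ _ (Multiset.mem_add.2 (.inl h)),
      fun i x h => b i _ (Multiset.mem_add.2 (.inl h)),
      fun x φ h => c _ φ (Multiset.mem_add.2 (.inl h))⟩
  | ctrR a _ _ ih =>
    intro σ hr
    obtain ⟨i, w, u⟩ := a
    exact ih σ (ref_R.2 ⟨(ref_R.1 hr).1, hr⟩)
  | ctrI b _ _ ih =>
    intro σ hr
    obtain ⟨i, w⟩ := b
    exact ih σ (ref_I.2 ⟨(ref_I.1 hr).1, hr⟩)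
  | ctrF w φ _ _ ih => intro σ hr; exact ih σ (ref_F.2 ⟨(ref_F.1 hr).1, hr⟩)
  | cut w φ _ _ _ ih1 ih2 =>
    intro σ hr
    by_cases hs : M.sat (σ w) φ
    · exact ih2 σ (ref_F.2 ⟨by rw [M.sat_neg]; exact not_not.2 hs, hr⟩)
    · exact ih1 σ (ref_F.2 ⟨hs, hr⟩)

/-! ### Completeness of `G3DS` by a fair saturation of an underivable sequent -/

/-- Sequents as a single object. -/
structure St (n : ℕ) where
  RA : RAt n
  IA : DAt n
  G : SSeq n

def Und (k : ℕ) {n : ℕ} (s : St n) : Prop := ¬ G3DS n k s.RA s.IA s.G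

/-- The formula has been decomposed. -/
def Res {n : ℕ} (s : St n) : ℕ × SFml n → Prop
  | (w, .or φ ψ) => (w, φ) ∈ s.G ∧ (w, ψ) ∈ s.G
  | (w, .and φ ψ) => (w, φ) ∈ s.G ∨ (w, ψ) ∈ s.G
  | (_, .box φ) => ∃ u, (u, φ) ∈ s.G
  | (w, .abox i φ) => ∃ u, (i, w, u) ∈ s.RA ∧ (u, φ) ∈ s.G
  | (_, .obl i φ) => ∃ u, (i, u) ∈ s.IA ∧ (u, φ) ∈ s.G
  | _ => False

structure Ext_s12 {n : ℕ} (s s' : St n) : Prop where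
  R : ∀ x ∈ s.RA, x ∈ s'.RA
  I : ∀ x ∈ s.IA, x ∈ s'.IA
  G : ∀ x ∈ s.G, x ∈ s'.G ∨ Res s' x

theorem Ext_s12.rfl {n : ℕ} (s : St n) : Ext_s12 s s := ⟨fun _ h => h, fun _ h => h, fun _ h => .inl h⟩

/-- Outcome of processing the formula `x` with witness label `u`. -/
def Proc {n : ℕ} (s s' : St n) (u : ℕ) : ℕ × SFml n → Prop
  | (_, .pos _) => True
  | (_, .neg _) => True
  | (_, .dia φ) => (u, φ) ∈ s'.G
  | (w, .adia i φ) => (i, w, u) ∈ s.RA → (u, φ) ∈ s'.G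
  | (_, .per i φ) => (i, u) ∈ s.IA → (u, φ) ∈ s'.G
  | x => Res s' x

theorem step_fm {n k : ℕ} (s : St n) (hs : Und k s) (x : ℕ × SFml n) (u : ℕ) :
    ∃ s', Und k s' ∧ Ext_s12 s s' ∧ (x ∈ s.G → Proc s s' u x) := by
  by_cases hx : x ∈ s.G
  swap
  · exact ⟨s, hs, Ext_s12.rfl s, fun h => absurd h hx⟩
  obtain ⟨RA, IA, G⟩ := s
  obtain ⟨Γ, hΓ⟩ := Multiset.exists_cons_of_mem hx
  dsimp only at hΓ hx
  subst hΓ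
  obtain ⟨w, φ⟩ := x
  have key : ∀ (RA' : RAt n) (IA' : DAt n) (D : SSeq n), RA ≤ RA' → IA ≤ IA' →
      ¬ G3DS n k RA' IA' (D + Γ) → Res ⟨RA', IA', D + Γ⟩ (w, φ) →
      ∃ s', Und k s' ∧ Ext_s12 ⟨RA, IA, (w, φ) ::ₘ Γ⟩ s' ∧ Res s' (w, φ) := by
    intro RA' IA' D h1 h2 h3 h4
    refine ⟨⟨RA', IA', D + Γ⟩, h3, ⟨fun _ h => Multiset.mem_of_le h1 h,
      fun _ h => Multiset.mem_of_le h2 h, fun y hy => ?_⟩, h4⟩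
    rcases Multiset.mem_cons.1 hy with rfl | hy
    · exact .inr h4
    · exact .inl (Multiset.mem_add.2 (.inr hy))
  have key2 : ∀ y : ℕ × SFml n, ¬ G3DS n k RA IA ((w, φ) ::ₘ y ::ₘ Γ) →
      ∃ s', Und k s' ∧ Ext_s12 ⟨RA, IA, (w, φ) ::ₘ Γ⟩ s' ∧ y ∈ s'.G := by
    intro y h
    refine ⟨⟨RA, IA, (w, φ) ::ₘ y ::ₘ Γ⟩, h, ⟨fun _ h => h, fun _ h => h, fun z hz => .inl ?_⟩,
      by simp⟩
    simp only [Multiset.mem_cons] at hz ⊢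
    tauto
  have fin : (∃ s', Und k s' ∧ Ext_s12 ⟨RA, IA, (w, φ) ::ₘ Γ⟩ s' ∧ Proc ⟨RA, IA, (w, φ) ::ₘ Γ⟩ s' u (w, φ)) →
      ∃ s', Und k s' ∧ Ext_s12 ⟨RA, IA, (w, φ) ::ₘ Γ⟩ s' ∧
        ((w, φ) ∈ (w, φ) ::ₘ Γ → Proc ⟨RA, IA, (w, φ) ::ₘ Γ⟩ s' u (w, φ)) := by
    rintro ⟨s', a, b, c⟩
    exact ⟨s', a, b, fun _ => c⟩
  apply fin
  clear fin
  cases φ with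
  | pos p => exact ⟨_, hs, Ext_s12.rfl _, trivial⟩
  | neg p => exact ⟨_, hs, Ext_s12.rfl _, trivial⟩
  | or φ ψ =>
    exact key RA IA {(w, φ), (w, ψ)} le_rfl le_rfl (fun h => hs (.orr (by simpa using h)))
      (by simp [Res])
  | and φ ψ =>
    by_cases h1 : G3DS n k RA IA ((w, φ) ::ₘ Γ)
    · exact key RA IA {(w, ψ)} le_rfl le_rfl (fun h => hs (.andr h1 (by simpa using h)))
        (by simp [Res])
    · exact key RA IA {(w, φ)} le_rfl le_rfl (by simpa using h1) (by simp [Res])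
  | box φ =>
    obtain ⟨v, hv⟩ := exists_fresh RA IA ((w, .box φ) ::ₘ Γ)
    exact key RA IA {(v, φ)} le_rfl le_rfl (fun h => hs (.boxr hv (by simpa using h)))
      ⟨v, by simp⟩
  | abox i φ =>
    obtain ⟨v, hv⟩ := exists_fresh RA IA ((w, .abox i φ) ::ₘ Γ)
    exact key ((i, w, v) ::ₘ RA) IA {(v, φ)} (Multiset.le_cons_self _ _) le_rfl
      (fun h => hs (.aboxr hv (by simpa using h))) ⟨v, by simp, by simp⟩
  | obl i φ =>
    obtain ⟨v, hv⟩ := exists_fresh RA IA ((w, .obl i φ) ::ₘ Γ)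
    exact key RA ((i, v) ::ₘ IA) {(v, φ)} le_rfl (Multiset.le_cons_self _ _)
      (fun h => hs (.oblr hv (by simpa using h))) ⟨v, by simp, by simp⟩
  | dia φ => exact key2 (u, φ) (fun h => hs (.diar h))
  | adia i φ =>
    by_cases hm : (i, w, u) ∈ RA
    · obtain ⟨s', a, b, c⟩ := key2 (u, φ) (fun h => hs (by
        obtain ⟨RA, rfl⟩ := Multiset.exists_cons_of_mem hm
        exact .adiar trivial h))
      exact ⟨s', a, b, fun _ => c⟩
    · exact ⟨_, hs, Ext_s12.rfl _, fun h => absurd h hm⟩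
  | per i φ =>
    by_cases hm : (i, u) ∈ IA
    · obtain ⟨s', a, b, c⟩ := key2 (u, φ) (fun h => hs (by
        obtain ⟨IA, rfl⟩ := Multiset.exists_cons_of_mem hm
        exact .operr trivial h))
      exact ⟨s', a, b, fun _ => c⟩
    · exact ⟨_, hs, Ext_s12.rfl _, fun h => absurd h hm⟩

/-- Saturation tasks: formulae, (IOA), (APC), (ref), (euc), (D2), (D3). -/
abbrev Task (n k : ℕ) : Type :=
  ((ℕ × SFml n) × ℕ) ⊕ (Fin (n + 1) → ℕ) ⊕ (Fin (n + 1) × (Fin (k + 1) → ℕ)) ⊕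
    (Fin (n + 1) × ℕ) ⊕ (Fin (n + 1) × ℕ × ℕ × ℕ) ⊕ Fin (n + 1) ⊕ (Fin (n + 1) × ℕ × ℕ)

def Done {n k : ℕ} (s s' : St n) : Task n k → Prop
  | .inl (x, u) => x ∈ s.G → Proc s s' u x
  | .inr (.inl ws) => ∃ u, ∀ i, (i, ws i, u) ∈ s'.RA
  | .inr (.inr (.inl (i, ws))) => 0 < k → ∃ m j : Fin (k + 1), (m : ℕ) < j ∧ (i, ws m, ws j) ∈ s'.RA
  | .inr (.inr (.inr (.inl (i, w)))) => (i, w, w) ∈ s'.RA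
  | .inr (.inr (.inr (.inr (.inl (i, w, u, v))))) =>
      (i, w, u) ∈ s.RA → (i, w, v) ∈ s.RA → u ≠ v → (i, u, v) ∈ s'.RA
  | .inr (.inr (.inr (.inr (.inr (.inl i))))) => ∃ u, (i, u) ∈ s'.IA
  | .inr (.inr (.inr (.inr (.inr (.inr (i, w, u)))))) =>
      (i, w, u) ∈ s.RA → (i, w) ∈ s.IA → (i, u) ∈ s'.IA

theorem ext_le {n : ℕ} {RA RA' : RAt n} {IA IA' : DAt n} {Γ : SSeq n} (h1 : RA ≤ RA')
    (h2 : IA ≤ IA') : Ext_s12 ⟨RA, IA, Γ⟩ ⟨RA', IA', Γ⟩ :=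
  ⟨fun _ h => Multiset.mem_of_le h1 h, fun _ h => Multiset.mem_of_le h2 h, fun _ h => .inl h⟩

theorem step_task {n k : ℕ} (t : Task n k) (s : St n) (hs : Und k s) :
    ∃ s', Und k s' ∧ Ext_s12 s s' ∧ Done s s' t := by
  have hs0 := hs
  obtain ⟨RA, IA, Γ⟩ := s
  unfold Und at hs
  dsimp only at hs
  rcases t with ⟨x, u⟩ | ws | ⟨i, ws⟩ | ⟨i, w⟩ | ⟨i, w, u, v⟩ | i | ⟨i, w, u⟩
  · exact step_fm _ hs0 x u
  · obtain ⟨u, hu⟩ := exists_fresh RA IA Γ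
    refine ⟨⟨_, IA, Γ⟩, fun h => hs (.ioa ws u hu h), ext_le (Multiset.le_add_left _ _) le_rfl,
      u, fun i => ?_⟩
    exact Multiset.mem_add.2 (.inl (Multiset.mem_map.2 ⟨i, Finset.mem_univ i, rfl⟩))
  · by_cases hk : 0 < k
    · by_contra hc
      apply hs
      refine .apc hk i ws fun m j hmj => ?_
      by_contra hd
      exact hc ⟨⟨_, IA, Γ⟩, hd, ext_le (Multiset.le_cons_self _ _) le_rfl,
        fun _ => ⟨m, j, hmj, Multiset.mem_cons_self _ _⟩⟩
    · exact ⟨_, hs0, Ext_s12.rfl _, fun h => absurd h hk⟩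
  · exact ⟨⟨(i, w, w) ::ₘ RA, IA, Γ⟩, fun h => hs (.refl trivial h),
      ext_le (Multiset.le_cons_self _ _) le_rfl, by simp [Done]⟩
  · by_cases hc : (i, w, u) ∈ RA ∧ (i, w, v) ∈ RA ∧ u ≠ v
    · obtain ⟨h1, h2, h3⟩ := hc
      refine ⟨⟨(i, u, v) ::ₘ RA, IA, Γ⟩, fun h => hs ?_,
        ext_le (Multiset.le_cons_self _ _) le_rfl, by simp [Done]⟩
      obtain ⟨R1, rfl⟩ := Multiset.exists_cons_of_mem h1
      have h2' : (i, w, v) ∈ R1 := by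
        rcases Multiset.mem_cons.1 h2 with h | h
        · cases h; exact absurd rfl h3
        · exact h
      obtain ⟨R2, rfl⟩ := Multiset.exists_cons_of_mem h2'
      refine .euc trivial ?_
      have e : (i, w, u) ::ₘ (i, w, v) ::ₘ (i, u, v) ::ₘ R2 =
          (i, u, v) ::ₘ (i, w, u) ::ₘ (i, w, v) ::ₘ R2 := by
        rw [Multiset.cons_swap (i, w, v), Multiset.cons_swap (i, w, u)]
      rw [e]
      exact h
    · exact ⟨_, hs0, Ext_s12.rfl _, fun a b c => absurd ⟨a, b, c⟩ hc⟩
  · obtain ⟨u, hu⟩ := exists_fresh RA IA Γ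
    exact ⟨⟨RA, (i, u) ::ₘ IA, Γ⟩, fun h => hs (.d2 trivial hu h),
      ext_le le_rfl (Multiset.le_cons_self _ _), u, by simp⟩
  · by_cases hc : (i, w, u) ∈ RA ∧ (i, w) ∈ IA
    · obtain ⟨h1, h2⟩ := hc
      refine ⟨⟨RA, (i, u) ::ₘ IA, Γ⟩, fun h => hs ?_,
        ext_le le_rfl (Multiset.le_cons_self _ _), by simp [Done]⟩
      obtain ⟨R1, rfl⟩ := Multiset.exists_cons_of_mem h1
      obtain ⟨I1, rfl⟩ := Multiset.exists_cons_of_mem h2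
      refine .d3 trivial ?_
      rw [Multiset.cons_swap]
      exact h
    · exact ⟨_, hs0, Ext_s12.rfl _, fun a b => absurd ⟨a, b⟩ hc⟩

/-- A code for formulae, used for countability. -/
def SFml.code {n : ℕ} : SFml n → ℕ
  | .pos p => Nat.pair 0 p
  | .neg p => Nat.pair 1 p
  | .or φ ψ => Nat.pair 2 (Nat.pair φ.code ψ.code)
  | .and φ ψ => Nat.pair 3 (Nat.pair φ.code ψ.code)
  | .box φ => Nat.pair 4 φ.code
  | .dia φ => Nat.pair 5 φ.code
  | .abox i φ => Nat.pair 6 (Nat.pair i φ.code)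
  | .adia i φ => Nat.pair 7 (Nat.pair i φ.code)
  | .obl i φ => Nat.pair 8 (Nat.pair i φ.code)
  | .per i φ => Nat.pair 9 (Nat.pair i φ.code)

theorem SFml.code_inj {n : ℕ} : Function.Injective (SFml.code (n := n)) := by
  intro φ
  induction φ <;> intro ψ h <;> cases ψ <;>
    simp only [SFml.code, Nat.pair_eq_pair, Fin.val_inj] at h <;> grind

instance {n : ℕ} : Countable (SFml n) := SFml.code_inj.countable

theorem complete {n k : ℕ} (s0 : St n) (h0 : Und k s0) :
    ∃ M : Mdl n k ℕ, Refutes M id s0.RA s0.IA s0.G := by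
  classical
  obtain ⟨e, he⟩ := exists_surjective_nat (Task n k)
  choose f hf using fun (t : Task n k) (s : {s : St n // Und k s}) => step_task t s.1 s.2
  let q : ℕ → {s : St n // Und k s} := fun m =>
    Nat.rec ⟨s0, h0⟩ (fun m s => ⟨f (e m.unpair.1) s, (hf _ s).1⟩) m
  have q0 : q 0 = ⟨s0, h0⟩ := rfl
  have hE : ∀ m, Ext_s12 (q m).1 (q (m + 1)).1 := fun m => (hf (e m.unpair.1) (q m)).2.1
  have hD : ∀ (t : Task n k) (N : ℕ), ∃ m ≥ N, Done (q m).1 (q (m + 1)).1 t := by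
    intro t N
    obtain ⟨a, rfl⟩ := he t
    refine ⟨Nat.pair a N, Nat.right_le_pair a N, ?_⟩
    have := (hf (e (Nat.pair a N).unpair.1) (q (Nat.pair a N))).2.2
    rw [Nat.unpair_pair] at this
    convert this using 1
    change (f (e (Nat.pair a N).unpair.1) (q (Nat.pair a N))) = _
    rw [Nat.unpair_pair]
  clear_value q
  have mR : ∀ {m m' x}, m ≤ m' → x ∈ (q m).1.RA → x ∈ (q m').1.RA := by
    intro m m' x hm hx
    induction hm with
    | refl => exact hx
    | step _ ih => exact (hE _).R _ ih
  have mI : ∀ {m m' x}, m ≤ m' → x ∈ (q m).1.IA → x ∈ (q m').1.IA := by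
    intro m m' x hm hx
    induction hm with
    | refl => exact hx
    | step _ ih => exact (hE _).I _ ih
  have mG : ∀ {m m' x}, m ≤ m' → x ∈ (q m).1.G → x ∈ (q m').1.G ∨ ∃ l, Res (q l).1 x := by
    intro m m' x hm hx
    induction hm with
    | refl => exact .inl hx
    | step _ ih =>
      rcases ih with h | h
      · rcases (hE _).G _ h with h | h
        · exact .inl h
        · exact .inr ⟨_, h⟩
      · exact .inr h
  -- processing a formula after stage `N`
  have pG : ∀ {m x} (u N : ℕ), x ∈ (q m).1.G →
      (∃ l ≥ N, Proc (q l).1 (q (l + 1)).1 u x) ∨ ∃ l, Res (q l).1 x := by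
    intro m x u N hx
    obtain ⟨l, hl, hd⟩ := hD (.inl (x, u)) (max m N)
    rcases mG (le_trans (le_max_left _ _) hl) hx with h | h
    · exact .inl ⟨l, le_trans (le_max_right _ _) hl, hd h⟩
    · exact .inr h
  let M : Mdl n k ℕ :=
    { R := fun i w u => ∃ m, (i, w, u) ∈ (q m).1.RA
      I := fun i u => ∃ m, (i, u) ∈ (q m).1.IA
      V := fun p w => ¬ ∃ m, (w, SFml.pos p) ∈ (q m).1.G
      rfl' := by
        intro i w
        obtain ⟨m, -, h⟩ := hD (.inr (.inr (.inr (.inl (i, w))))) 0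
        exact ⟨_, h⟩
      euc' := by
        rintro i w u v ⟨a, ha⟩ ⟨b, hb⟩
        by_cases huv : u = v
        · subst huv
          obtain ⟨m, -, h⟩ := hD (.inr (.inr (.inr (.inl (i, u))))) 0
          exact ⟨_, h⟩
        · obtain ⟨m, hm, h⟩ := hD (.inr (.inr (.inr (.inr (.inl (i, w, u, v)))))) (max a b)
          exact ⟨_, h (mR (le_trans (le_max_left _ _) hm) ha)
            (mR (le_trans (le_max_right _ _) hm) hb) huv⟩
      ioa' := by
        intro ws
        obtain ⟨m, -, u, h⟩ := hD (.inr (.inl ws)) 0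
        exact ⟨u, fun i => ⟨_, h i⟩⟩
      apc' := by
        intro hk i ws
        obtain ⟨m, -, h⟩ := hD (.inr (.inr (.inl (i, ws)))) 0
        obtain ⟨a, b, hab, h⟩ := h hk
        exact ⟨a, b, hab, _, h⟩
      d2' := by
        intro i
        obtain ⟨m, -, u, h⟩ := hD (.inr (.inr (.inr (.inr (.inr (.inl i)))))) 0
        exact ⟨u, _, h⟩
      d3' := by
        rintro i w u ⟨a, ha⟩ ⟨b, hb⟩
        obtain ⟨m, hm, h⟩ := hD (.inr (.inr (.inr (.inr (.inr (.inr (i, w, u))))))) (max a b)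
        exact ⟨_, h (mR (le_trans (le_max_left _ _) hm) ha)
            (mI (le_trans (le_max_right _ _) hm) hb)⟩ }
  have truth : ∀ (φ : SFml n) (w m : ℕ), (w, φ) ∈ (q m).1.G → ¬ M.sat w φ := by
    intro φ
    induction φ with
    | pos p => intro w m hm hs; exact hs ⟨m, hm⟩
    | neg p =>
      intro w m hm hs
      apply hs
      rintro ⟨m', hm'⟩
      rcases mG (le_max_left m m') hm with h1 | ⟨_, h⟩
      swap
      · exact h
      rcases mG (le_max_right m m') hm' with h2 | ⟨_, h⟩
      swap
      · exact h
      apply (q (max m m')).2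
      obtain ⟨G1, hG⟩ := Multiset.exists_cons_of_mem h2
      rw [hG] at h1 ⊢
      have h3 : (w, SFml.neg p) ∈ G1 := by
        rcases Multiset.mem_cons.1 h1 with h | h
        · cases h
        · exact h
      obtain ⟨G2, rfl⟩ := Multiset.exists_cons_of_mem h3
      exact .id _ _ _ _ _
    | or φ ψ ih1 ih2 =>
      intro w m hm hs
      obtain ⟨l, h⟩ : ∃ l, Res (q l).1 (w, SFml.or φ ψ) := by
        rcases pG 0 0 hm with ⟨l, _, h⟩ | h
        exacts [⟨_, h⟩, h]
      exact hs.elim (ih1 _ _ h.1) (ih2 _ _ h.2)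
    | and φ ψ ih1 ih2 =>
      intro w m hm hs
      obtain ⟨l, h⟩ : ∃ l, Res (q l).1 (w, SFml.and φ ψ) := by
        rcases pG 0 0 hm with ⟨l, _, h⟩ | h
        exacts [⟨_, h⟩, h]
      exact Or.elim h (fun h => ih1 _ _ h hs.1) (fun h => ih2 _ _ h hs.2)
    | box φ ih =>
      intro w m hm hs
      obtain ⟨l, u, h⟩ : ∃ l, Res (q l).1 (w, SFml.box φ) := by
        rcases pG 0 0 hm with ⟨l, _, h⟩ | h
        exacts [⟨_, h⟩, h]
      exact ih _ _ h (hs u)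
    | abox i φ ih =>
      intro w m hm hs
      obtain ⟨l, u, hR, h⟩ : ∃ l, Res (q l).1 (w, SFml.abox i φ) := by
        rcases pG 0 0 hm with ⟨l, _, h⟩ | h
        exacts [⟨_, h⟩, h]
      exact ih _ _ h (hs u ⟨_, hR⟩)
    | obl i φ ih =>
      intro w m hm hs
      obtain ⟨l, u, hR, h⟩ : ∃ l, Res (q l).1 (w, SFml.obl i φ) := by
        rcases pG 0 0 hm with ⟨l, _, h⟩ | h
        exacts [⟨_, h⟩, h]
      exact ih _ _ h (hs u ⟨_, hR⟩)
    | dia φ ih =>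
      rintro w m hm ⟨u, hs⟩
      rcases pG u 0 hm with ⟨l, _, h⟩ | ⟨_, h⟩
      · exact ih _ _ h hs
      · exact h
    | adia i φ ih =>
      rintro w m hm ⟨u, ⟨a, ha⟩, hs⟩
      rcases pG u a hm with ⟨l, hl, h⟩ | ⟨_, h⟩
      · exact ih _ _ (h (mR hl ha)) hs
      · exact h
    | per i φ ih =>
      rintro w m hm ⟨u, ⟨a, ha⟩, hs⟩
      rcases pG u a hm with ⟨l, hl, h⟩ | ⟨_, h⟩
      · exact ih _ _ (h (mI hl ha)) hs
      · exact h
  exact ⟨M, fun i w u h => ⟨0, by rw [q0]; exact h⟩,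
    fun i u h => ⟨0, by rw [q0]; exact h⟩, fun w φ h => truth φ w 0 (by rw [q0]; exact h)⟩

/-- For all `n, k ∈ ℕ`, every labelled sequent derivable in
`DS_n^k L + Str(DS)` is derivable in `G3DS_n^k`. -/
theorem dslStr_to_g3DS (n k : ℕ) (RA : RAt n) (IA : DAt n) (Γ : SSeq n)
    (h : DSLStr n k RA IA Γ) : G3DS n k RA IA Γ := by
  by_contra hc
  obtain ⟨M, hM⟩ := complete (k := k) ⟨RA, IA, Γ⟩ hc
  exact sound h M _ hM

end DeonticStit
end

section
/- Every labelled sequent derivable in the quasi-refined calculus IntQL* is derivable in G3IntQ, and every labelled sequent derivable in IntQCL* is derivable in G3IntQC. -/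
/-!
Labelled sequent calculi for first-order intuitionistic logics.
-/

namespace IntFOL

/-- Terms: parameters and (de Bruijn) bound variables. -/
inductive ITerm : Type
  | param : ℕ → ITerm
  | bvar : ℕ → ITerm

/-- First-order formulae built from atomic formulae and `⊥` by
`∧`, `∨`, `⊃`, `∃`, `∀` (quantifiers in de Bruijn style). -/
inductive IFml : Type
  | atom : ℕ → List ITerm → IFml
  | bot : IFml
  | and : IFml → IFml → IFml
  | or : IFml → IFml → IFml
  | imp : IFml → IFml → IFml
  | all : IFml → IFml
  | ex : IFml → IFml

/-- Instantiate the bound variable of index `d` by the parameter `a` in a term. -/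
def instT (a d : ℕ) : ITerm → ITerm
  | ITerm.param b => ITerm.param b
  | ITerm.bvar m => if m = d then ITerm.param a else ITerm.bvar m

/-- Instantiate the bound variable of index `d` by the parameter `a`. -/
def instF (a : ℕ) : ℕ → IFml → IFml
  | d, IFml.atom P ts => IFml.atom P (ts.map (instT a d))
  | _, IFml.bot => IFml.bot
  | d, IFml.and φ ψ => IFml.and (instF a d φ) (instF a d ψ)
  | d, IFml.or φ ψ => IFml.or (instF a d φ) (instF a d ψ)
  | d, IFml.imp φ ψ => IFml.imp (instF a d φ) (instF a d ψ)
  | d, IFml.all φ => IFml.all (instF a (d + 1) φ)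
  | d, IFml.ex φ => IFml.ex (instF a (d + 1) φ)

/-- `open0 φ a` is the substitution `φ(a/x)` of the parameter `a` for the
variable bound by the outermost (removed) quantifier. -/
def open0 (φ : IFml) (a : ℕ) : IFml := instF a 0 φ

/-- The parameter `a` occurs in a term. -/
def pT (a : ℕ) : ITerm → Prop
  | ITerm.param b => b = a
  | ITerm.bvar _ => False

/-- The parameter `a` occurs in a formula. -/
def pF (a : ℕ) : IFml → Prop
  | IFml.atom _ ts => ∃ t ∈ ts, pT a t
  | IFml.bot => False
  | IFml.and φ ψ => pF a φ ∨ pF a ψ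
  | IFml.or φ ψ => pF a φ ∨ pF a ψ
  | IFml.imp φ ψ => pF a φ ∨ pF a ψ
  | IFml.all φ => pF a φ
  | IFml.ex φ => pF a φ

/-- All bound-variable indices of a term are below `k`. -/
def lcT (k : ℕ) : ITerm → Prop
  | ITerm.param _ => True
  | ITerm.bvar m => m < k

/-- All free bound-variable indices of a formula are below `k`;
`lcF 0 φ` says that `φ` has no free (bound) variables. -/
def lcF : ℕ → IFml → Prop
  | k, IFml.atom _ ts => ∀ t ∈ ts, lcT k t
  | _, IFml.bot => True
  | k, IFml.and φ ψ => lcF k φ ∧ lcF k ψ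
  | k, IFml.or φ ψ => lcF k φ ∧ lcF k ψ
  | k, IFml.imp φ ψ => lcF k φ ∧ lcF k ψ
  | k, IFml.all φ => lcF (k + 1) φ
  | k, IFml.ex φ => lcF (k + 1) φ

/-- Multisets of labelled formulae `w : φ`. -/
abbrev LSeq : Type := Multiset (ℕ × IFml)

/-- Edges of the propagation graph determined by the relational atoms `w ≤ u`:
`true` encodes the character `a` (a forward move) and `false` its converse `ā`. -/
def IEdge (Rle : Multiset (ℕ × ℕ)) (w u : ℕ) (c : Bool) : Prop :=
  if c then (w, u) ∈ Rle else (u, w) ∈ Rle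

/-- Propagation paths in the propagation graph, with their strings. -/
inductive BPath (Rle : Multiset (ℕ × ℕ)) : ℕ → ℕ → List Bool → Prop
  | nil (w : ℕ) : BPath Rle w w []
  | cons {w u v : ℕ} {c : Bool} {s : List Bool} :
      IEdge Rle w u c → BPath Rle u v s → BPath Rle w v (c :: s)

/-- One-step rewriting for string rewriting systems over the alphabet `{a, ā}`. -/
def OneStepB (P : Set (Bool × List Bool)) (s t : List Bool) : Prop :=
  ∃ u v x r, (x, r) ∈ P ∧ s = u ++ x :: v ∧ t = u ++ r ++ v

/-- `LangB P x s` iff `x →*_P s`. -/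
def LangB (P : Set (Bool × List Bool)) (x : Bool) (s : List Bool) : Prop :=
  Relation.ReflTransGen (OneStepB P) [x] s

/-- The system `S4 := {a → ε, a → a·a, ā → ε, ā → ā·ā}`
(`true` is `a`, `false` is `ā`). -/
def S4sys : Set (Bool × List Bool) :=
  {(true, []), (true, [true, true]), (false, []), (false, [false, false])}

/-- The system `S5 := {a → ε, a → ā·a, ā → ε, ā → a·ā}`. -/
def S5sys : Set (Bool × List Bool) :=
  {(true, []), (true, [false, true]), (false, []), (false, [true, false])}

/-- There is a propagation path `π(w,u)` with `s_π(w,u) ∈ L_{S4}(a)`. -/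
def Cond4 (Rle : Multiset (ℕ × ℕ)) (w u : ℕ) : Prop :=
  ∃ s, BPath Rle w u s ∧ LangB S4sys true s

/-- There is a propagation path `π(w,u)` with `s_π(w,u) ∈ L_{S5}(a)`. -/
def Cond5 (Rle : Multiset (ℕ × ℕ)) (w u : ℕ) : Prop :=
  ∃ s, BPath Rle w u s ∧ LangB S5sys true s

/-- `Cond4` for the non-constant domain case (`cd = false`), `Cond5` for the
constant domain case (`cd = true`). -/
def CondD (cd : Bool) (Rle : Multiset (ℕ × ℕ)) (w u : ℕ) : Prop :=
  if cd then Cond5 Rle w u else Cond4 Rle w u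

/-- The label `v` occurs in the labelled sequent `R, Γ ⊢ Δ` (where the
antecedent `R` consists of the relational atoms `Rle` and domain atoms `Dom`,
a domain atom `a ∈ D_w` being encoded as the pair `(a, w)`). -/
def loccurs (v : ℕ) (Rle Dom : Multiset (ℕ × ℕ)) (Γ Δ : LSeq) : Prop :=
  (∃ w u, (w, u) ∈ Rle ∧ (v = w ∨ v = u)) ∨ (∃ a, (a, v) ∈ Dom) ∨
    (∃ φ, (v, φ) ∈ Γ) ∨ ∃ φ, (v, φ) ∈ Δ

/-- The parameter `a` occurs in the labelled sequent. -/
def poccurs (a : ℕ) (Dom : Multiset (ℕ × ℕ)) (Γ Δ : LSeq) : Prop :=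
  (∃ w, (a, w) ∈ Dom) ∨ (∃ w φ, (w, φ) ∈ Γ ∧ pF a φ) ∨ ∃ w φ, (w, φ) ∈ Δ ∧ pF a φ

/-- Gated labelled sequent calculi for first-order intuitionistic logics.
Sequents are `Rle, Dom, Γ ⊢ Δ`.  The rules `(⊥l)`, `(∧l)`, `(∧r)`, `(∨l)`,
`(∨r)`, `(⊃r)`, `(∃l)`, `(∀r)` are always present; the rules `(id)`, `(⊃l)`,
`(∃r)`, `(∀l)` of `G3IntQ` are present exactly when `gOld` holds; the structural
rules `(ref)`, `(tra)`, `(nd)`, `(ned)` — and, when `cd = true`, `(cd)` — are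
present exactly when `gStr` holds; and the rules `(id^X)`, `(Pr_⊃)`, `(∃r1^X)`,
`(∃r2^X)`, `(∀l1^X)`, `(∀l2^X)` of `R(Q)` (for `cd = false`) or `R(QC)` (for
`cd = true`) are present exactly when `gNew` holds.  In particular
`IDer false True True False` is `G3IntQ`, `IDer true True True False` is
`G3IntQC`, `IDer false False False True` is `IntQL*` and
`IDer true False False True` is `IntQCL*`. -/
inductive IDer (cd : Bool) (gOld gStr gNew : Prop) :
    Multiset (ℕ × ℕ) → Multiset (ℕ × ℕ) → LSeq → LSeq → Prop
  | botl (Rle Dom : Multiset (ℕ × ℕ)) (Γ Δ : LSeq) (w : ℕ) :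
      IDer cd gOld gStr gNew Rle Dom ((w, IFml.bot) ::ₘ Γ) Δ
  | andl {Rle Dom : Multiset (ℕ × ℕ)} {Γ Δ : LSeq} {w : ℕ} {φ ψ : IFml} :
      IDer cd gOld gStr gNew Rle Dom ((w, φ) ::ₘ (w, ψ) ::ₘ Γ) Δ →
      IDer cd gOld gStr gNew Rle Dom ((w, IFml.and φ ψ) ::ₘ Γ) Δ
  | andr {Rle Dom : Multiset (ℕ × ℕ)} {Γ Δ : LSeq} {w : ℕ} {φ ψ : IFml} :
      IDer cd gOld gStr gNew Rle Dom Γ ((w, φ) ::ₘ Δ) →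
      IDer cd gOld gStr gNew Rle Dom Γ ((w, ψ) ::ₘ Δ) →
      IDer cd gOld gStr gNew Rle Dom Γ ((w, IFml.and φ ψ) ::ₘ Δ)
  | orl {Rle Dom : Multiset (ℕ × ℕ)} {Γ Δ : LSeq} {w : ℕ} {φ ψ : IFml} :
      IDer cd gOld gStr gNew Rle Dom ((w, φ) ::ₘ Γ) Δ →
      IDer cd gOld gStr gNew Rle Dom ((w, ψ) ::ₘ Γ) Δ →
      IDer cd gOld gStr gNew Rle Dom ((w, IFml.or φ ψ) ::ₘ Γ) Δ
  | orr {Rle Dom : Multiset (ℕ × ℕ)} {Γ Δ : LSeq} {w : ℕ} {φ ψ : IFml} :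
      IDer cd gOld gStr gNew Rle Dom Γ ((w, φ) ::ₘ (w, ψ) ::ₘ Δ) →
      IDer cd gOld gStr gNew Rle Dom Γ ((w, IFml.or φ ψ) ::ₘ Δ)
  | impr {Rle Dom : Multiset (ℕ × ℕ)} {Γ Δ : LSeq} {w u : ℕ} {φ ψ : IFml} :
      ¬ loccurs u Rle Dom Γ ((w, IFml.imp φ ψ) ::ₘ Δ) →
      IDer cd gOld gStr gNew ((w, u) ::ₘ Rle) Dom ((u, φ) ::ₘ Γ) ((u, ψ) ::ₘ Δ) →
      IDer cd gOld gStr gNew Rle Dom Γ ((w, IFml.imp φ ψ) ::ₘ Δ)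
  | exl {Rle Dom : Multiset (ℕ × ℕ)} {Γ Δ : LSeq} {w a : ℕ} {φ : IFml} :
      ¬ poccurs a Dom ((w, IFml.ex φ) ::ₘ Γ) Δ →
      IDer cd gOld gStr gNew Rle ((a, w) ::ₘ Dom) ((w, open0 φ a) ::ₘ Γ) Δ →
      IDer cd gOld gStr gNew Rle Dom ((w, IFml.ex φ) ::ₘ Γ) Δ
  | allr {Rle Dom : Multiset (ℕ × ℕ)} {Γ Δ : LSeq} {w u a : ℕ} {φ : IFml} :
      ¬ loccurs u Rle Dom Γ ((w, IFml.all φ) ::ₘ Δ) →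
      ¬ poccurs a Dom Γ ((w, IFml.all φ) ::ₘ Δ) →
      IDer cd gOld gStr gNew ((w, u) ::ₘ Rle) ((a, u) ::ₘ Dom) Γ
        ((u, open0 φ a) ::ₘ Δ) →
      IDer cd gOld gStr gNew Rle Dom Γ ((w, IFml.all φ) ::ₘ Δ)
  | id (h : gOld) {Rle Dom : Multiset (ℕ × ℕ)} {Γ Δ : LSeq} (w u P : ℕ)
      (as : List ℕ) :
      IDer cd gOld gStr gNew ((w, u) ::ₘ Rle)
        ((↑(as.map fun a => (a, w)) : Multiset (ℕ × ℕ)) + Dom)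
        ((w, IFml.atom P (as.map ITerm.param)) ::ₘ Γ)
        ((u, IFml.atom P (as.map ITerm.param)) ::ₘ Δ)
  | impl (h : gOld) {Rle Dom : Multiset (ℕ × ℕ)} {Γ Δ : LSeq} {w u : ℕ}
      {φ ψ : IFml} :
      IDer cd gOld gStr gNew ((w, u) ::ₘ Rle) Dom ((w, IFml.imp φ ψ) ::ₘ Γ)
        ((u, φ) ::ₘ Δ) →
      IDer cd gOld gStr gNew ((w, u) ::ₘ Rle) Dom
        ((w, IFml.imp φ ψ) ::ₘ (u, ψ) ::ₘ Γ) Δ →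
      IDer cd gOld gStr gNew ((w, u) ::ₘ Rle) Dom ((w, IFml.imp φ ψ) ::ₘ Γ) Δ
  | exr (h : gOld) {Rle Dom : Multiset (ℕ × ℕ)} {Γ Δ : LSeq} {w a : ℕ}
      {φ : IFml} :
      IDer cd gOld gStr gNew Rle ((a, w) ::ₘ Dom) Γ
        ((w, open0 φ a) ::ₘ (w, IFml.ex φ) ::ₘ Δ) →
      IDer cd gOld gStr gNew Rle ((a, w) ::ₘ Dom) Γ ((w, IFml.ex φ) ::ₘ Δ)
  | alll (h : gOld) {Rle Dom : Multiset (ℕ × ℕ)} {Γ Δ : LSeq} {w u a : ℕ}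
      {φ : IFml} :
      IDer cd gOld gStr gNew ((w, u) ::ₘ Rle) ((a, u) ::ₘ Dom)
        ((u, open0 φ a) ::ₘ (w, IFml.all φ) ::ₘ Γ) Δ →
      IDer cd gOld gStr gNew ((w, u) ::ₘ Rle) ((a, u) ::ₘ Dom)
        ((w, IFml.all φ) ::ₘ Γ) Δ
  | ref (h : gStr) {Rle Dom : Multiset (ℕ × ℕ)} {Γ Δ : LSeq} {w : ℕ} :
      IDer cd gOld gStr gNew ((w, w) ::ₘ Rle) Dom Γ Δ →
      IDer cd gOld gStr gNew Rle Dom Γ Δ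
  | tra (h : gStr) {Rle Dom : Multiset (ℕ × ℕ)} {Γ Δ : LSeq} {w u v : ℕ} :
      IDer cd gOld gStr gNew ((w, u) ::ₘ (u, v) ::ₘ (w, v) ::ₘ Rle) Dom Γ Δ →
      IDer cd gOld gStr gNew ((w, u) ::ₘ (u, v) ::ₘ Rle) Dom Γ Δ
  | nd (h : gStr) {Rle Dom : Multiset (ℕ × ℕ)} {Γ Δ : LSeq} {v w a : ℕ} :
      IDer cd gOld gStr gNew ((v, w) ::ₘ Rle) ((a, v) ::ₘ (a, w) ::ₘ Dom) Γ Δ →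
      IDer cd gOld gStr gNew ((v, w) ::ₘ Rle) ((a, v) ::ₘ Dom) Γ Δ
  | ned (h : gStr) {Rle Dom : Multiset (ℕ × ℕ)} {Γ Δ : LSeq} {a w : ℕ} :
      ¬ poccurs a Dom Γ Δ →
      IDer cd gOld gStr gNew Rle ((a, w) ::ₘ Dom) Γ Δ →
      IDer cd gOld gStr gNew Rle Dom Γ Δ
  | cdr (h : gStr) (hcd : cd = true) {Rle Dom : Multiset (ℕ × ℕ)} {Γ Δ : LSeq}
      {v w a : ℕ} :
      IDer cd gOld gStr gNew ((v, w) ::ₘ Rle) ((a, w) ::ₘ (a, v) ::ₘ Dom) Γ Δ →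
      IDer cd gOld gStr gNew ((v, w) ::ₘ Rle) ((a, w) ::ₘ Dom) Γ Δ
  | idN (h : gNew) {Rle Dom : Multiset (ℕ × ℕ)} {Γ Δ : LSeq} (w u P : ℕ)
      (aus : List (ℕ × ℕ)) :
      (∀ p ∈ aus, CondD cd Rle p.2 w) →
      Cond4 Rle w u →
      IDer cd gOld gStr gNew Rle ((↑aus : Multiset (ℕ × ℕ)) + Dom)
        ((w, IFml.atom P (aus.map fun p => ITerm.param p.1)) ::ₘ Γ)
        ((u, IFml.atom P (aus.map fun p => ITerm.param p.1)) ::ₘ Δ)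
  | prImp (h : gNew) {Rle Dom : Multiset (ℕ × ℕ)} {Γ Δ : LSeq} {w u : ℕ}
      {φ ψ : IFml} :
      Cond4 Rle w u →
      IDer cd gOld gStr gNew Rle Dom ((w, IFml.imp φ ψ) ::ₘ Γ) ((u, φ) ::ₘ Δ) →
      IDer cd gOld gStr gNew Rle Dom ((w, IFml.imp φ ψ) ::ₘ (u, ψ) ::ₘ Γ) Δ →
      IDer cd gOld gStr gNew Rle Dom ((w, IFml.imp φ ψ) ::ₘ Γ) Δ
  | exr1 (h : gNew) {Rle Dom : Multiset (ℕ × ℕ)} {Γ Δ : LSeq} {w u a : ℕ}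
      {φ : IFml} :
      CondD cd Rle u w →
      IDer cd gOld gStr gNew Rle ((a, u) ::ₘ Dom) Γ
        ((w, open0 φ a) ::ₘ (w, IFml.ex φ) ::ₘ Δ) →
      IDer cd gOld gStr gNew Rle ((a, u) ::ₘ Dom) Γ ((w, IFml.ex φ) ::ₘ Δ)
  | exr2 (h : gNew) {Rle Dom : Multiset (ℕ × ℕ)} {Γ Δ : LSeq} {w u a : ℕ}
      {φ : IFml} :
      CondD cd Rle u w →
      ¬ poccurs a Dom Γ ((w, IFml.ex φ) ::ₘ Δ) →
      IDer cd gOld gStr gNew Rle ((a, u) ::ₘ Dom) Γ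
        ((w, open0 φ a) ::ₘ (w, IFml.ex φ) ::ₘ Δ) →
      IDer cd gOld gStr gNew Rle Dom Γ ((w, IFml.ex φ) ::ₘ Δ)
  | alll1 (h : gNew) {Rle Dom : Multiset (ℕ × ℕ)} {Γ Δ : LSeq} {w u v a : ℕ}
      {φ : IFml} :
      CondD cd Rle u v → Cond4 Rle w v →
      IDer cd gOld gStr gNew Rle ((a, u) ::ₘ Dom)
        ((w, IFml.all φ) ::ₘ (v, open0 φ a) ::ₘ Γ) Δ →
      IDer cd gOld gStr gNew Rle ((a, u) ::ₘ Dom) ((w, IFml.all φ) ::ₘ Γ) Δ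
  | alll2 (h : gNew) {Rle Dom : Multiset (ℕ × ℕ)} {Γ Δ : LSeq} {w u v a : ℕ}
      {φ : IFml} :
      CondD cd Rle u v → Cond4 Rle w v →
      ¬ poccurs a Dom ((w, IFml.all φ) ::ₘ Γ) Δ →
      IDer cd gOld gStr gNew Rle ((a, u) ::ₘ Dom)
        ((w, IFml.all φ) ::ₘ (v, open0 φ a) ::ₘ Γ) Δ →
      IDer cd gOld gStr gNew Rle Dom ((w, IFml.all φ) ::ₘ Γ) Δ

abbrev G3 (cd : Bool) := IDer cd True True False

theorem s4_true {s : List Bool} (h : LangB S4sys true s) : ∀ c ∈ s, c = true := by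
  induction h with
  | refl => simp
  | tail _ hs ih =>
    obtain ⟨u, v, x, r, hP, rfl, rfl⟩ := hs
    have hx : x = true := ih x (by simp)
    subst hx
    simp [S4sys] at hP
    intro c hc
    rcases hP with rfl | rfl <;> simp at hc ih <;> grind

theorem IEdge.mono {R R' : Multiset (ℕ × ℕ)} (h : R ≤ R') {w u : ℕ} {c : Bool}
    (e : IEdge R w u c) : IEdge R' w u c := by
  unfold IEdge at *
  split_ifs at * <;> exact Multiset.mem_of_le h e

theorem BPath.mono {R R' : Multiset (ℕ × ℕ)} (h : R ≤ R') {w u : ℕ} {s : List Bool}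
    (p : BPath R w u s) : BPath R' w u s := by
  induction p with
  | nil w => exact BPath.nil w
  | cons e _ ih => exact BPath.cons (e.mono h) ih

theorem Cond4.mono {R R' : Multiset (ℕ × ℕ)} (h : R ≤ R') {w u : ℕ}
    (p : Cond4 R w u) : Cond4 R' w u := by
  obtain ⟨s, h1, h2⟩ := p
  exact ⟨s, h1.mono h, h2⟩

theorem CondD.mono {cd : Bool} {R R' : Multiset (ℕ × ℕ)} (h : R ≤ R') {w u : ℕ}
    (p : CondD cd R w u) : CondD cd R' w u := by
  unfold CondD at *
  split_ifs at *
  · obtain ⟨s, h1, h2⟩ := p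
    exact ⟨s, h1.mono h, h2⟩
  · exact p.mono h

theorem tra' {cd : Bool} {R D : Multiset (ℕ × ℕ)} {Γ Δ : LSeq} {w u v : ℕ}
    (h1 : (w, u) ∈ R) (h2 : (u, v) ∈ R) (h : G3 cd ((w, v) ::ₘ R) D Γ Δ) :
    G3 cd R D Γ Δ := by
  by_cases e : (w, u) = (u, v)
  · obtain ⟨rfl, rfl⟩ := Prod.mk.inj e
    exact IDer.ref trivial h
  · obtain ⟨R1, rfl⟩ := Multiset.exists_cons_of_mem h1
    have h2' : (u, v) ∈ R1 := by
      rcases Multiset.mem_cons.1 h2 with h | h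
      · exact absurd h.symm e
      · exact h
    obtain ⟨R2, rfl⟩ := Multiset.exists_cons_of_mem h2'
    apply IDer.tra trivial
    rw [Multiset.cons_swap (u, v), Multiset.cons_swap (w, u)]
    exact h

theorem nd' {cd : Bool} {R D : Multiset (ℕ × ℕ)} {Γ Δ : LSeq} {v w a : ℕ}
    (h1 : (v, w) ∈ R) (h2 : (a, v) ∈ D) (h : G3 cd R ((a, w) ::ₘ D) Γ Δ) :
    G3 cd R D Γ Δ := by
  obtain ⟨R1, rfl⟩ := Multiset.exists_cons_of_mem h1
  obtain ⟨D1, rfl⟩ := Multiset.exists_cons_of_mem h2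
  apply IDer.nd trivial
  rw [Multiset.cons_swap]
  exact h

theorem cd' {cd : Bool} (hcd : cd = true) {R D : Multiset (ℕ × ℕ)} {Γ Δ : LSeq} {v w a : ℕ}
    (h1 : (v, w) ∈ R) (h2 : (a, w) ∈ D) (h : G3 cd R ((a, v) ::ₘ D) Γ Δ) :
    G3 cd R D Γ Δ := by
  obtain ⟨R1, rfl⟩ := Multiset.exists_cons_of_mem h1
  obtain ⟨D1, rfl⟩ := Multiset.exists_cons_of_mem h2
  apply IDer.cdr trivial hcd
  rw [Multiset.cons_swap]
  exact h

/-- label occurs in a relational multiset -/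
def labR (v : ℕ) (R : Multiset (ℕ × ℕ)) : Prop := ∃ p ∈ R, v = p.1 ∨ v = p.2

theorem pathR {R : Multiset (ℕ × ℕ)} {w u : ℕ} {s : List Bool}
    (p : BPath R w u s) (hs : ∀ c ∈ s, c = true) (cd : Bool) :
    ∃ R', R ≤ R' ∧ (w, u) ∈ R' ∧ (∀ v, labR v R' → labR v R ∨ v = u) ∧
      ∀ D Γ Δ, G3 cd R' D Γ Δ → G3 cd R D Γ Δ := by
  induction p with
  | nil w =>
    refine ⟨(w, w) ::ₘ R, Multiset.le_cons_self _ _, by simp, ?_, ?_⟩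
    · rintro v ⟨p, hp, hv⟩
      rcases Multiset.mem_cons.1 hp with rfl | hp
      · right; simpa using hv
      · left; exact ⟨p, hp, hv⟩
    · intro D Γ Δ h
      exact IDer.ref trivial h
  | @cons w x u c s e p ih =>
    obtain ⟨R', h1, h2, h3, h4⟩ := ih (fun c hc => hs c (by simp [hc]))
    have hc : c = true := hs c (by simp)
    subst hc
    have e' : (w, x) ∈ R := by simpa [IEdge] using e
    refine ⟨(w, u) ::ₘ R', h1.trans (Multiset.le_cons_self _ _), by simp, ?_, ?_⟩
    · rintro v ⟨p, hp, hv⟩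
      rcases Multiset.mem_cons.1 hp with rfl | hp
      · rcases hv with hv | hv
        · left; exact ⟨(w, x), e', Or.inl hv⟩
        · right; exact hv
      · exact h3 v ⟨p, hp, hv⟩
    · intro D Γ Δ h
      exact h4 _ _ _ (tra' (Multiset.mem_of_le h1 e') h2 h)

theorem pathD {cd : Bool} {R : Multiset (ℕ × ℕ)} {w u a : ℕ} {s : List Bool}
    (p : BPath R u w s) (hs : cd = true ∨ ∀ c ∈ s, c = true) :
    ∀ D, (a, u) ∈ D →
    ∃ D', D ≤ D' ∧ (a, w) ∈ D' ∧ (∀ p ∈ D', p ∈ D ∨ p.1 = a ∧ labR p.2 R) ∧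
      ∀ Γ Δ, G3 cd R D' Γ Δ → G3 cd R D Γ Δ := by
  induction p with
  | nil w => exact fun D hD => ⟨D, le_rfl, hD, fun p hp => Or.inl hp, fun _ _ h => h⟩
  | @cons u x w c s e p ih =>
    intro D hD
    obtain ⟨D', h1, h2, h3, h4⟩ := ih
      (hs.imp (fun h => h) fun h c hc => h c (by simp [hc])) ((a, x) ::ₘ D) (by simp)
    refine ⟨D', (Multiset.le_cons_self _ _).trans h1, h2, ?_, ?_⟩
    · intro p hp
      rcases h3 p hp with h | h
      · rcases Multiset.mem_cons.1 h with rfl | h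
        · right
          refine ⟨rfl, ?_⟩
          cases c
          · exact ⟨(x, u), by simpa [IEdge] using e, Or.inl rfl⟩
          · exact ⟨(u, x), by simpa [IEdge] using e, Or.inr rfl⟩
        · exact Or.inl h
      · exact Or.inr h
    · intro Γ Δ h
      have h := h4 Γ Δ h
      cases c
      · have hcd : cd = true := by
          rcases hs with h | h
          · exact h
          · exact absurd (h false (by simp)) (by simp)
        exact cd' hcd (by simpa [IEdge] using e) hD h
      · exact nd' (by simpa [IEdge] using e) hD h

theorem condD_path {cd : Bool} {R : Multiset (ℕ × ℕ)} {u w : ℕ} (h : CondD cd R u w) :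
    ∃ s, BPath R u w s ∧ (cd = true ∨ ∀ c ∈ s, c = true) := by
  unfold CondD at h
  split_ifs at h with hc
  · obtain ⟨s, h1, _⟩ := h
    exact ⟨s, h1, Or.inl hc⟩
  · obtain ⟨s, h1, h2⟩ := h
    exact ⟨s, h1, Or.inr (s4_true h2)⟩

theorem stepR {cd : Bool} {R D : Multiset (ℕ × ℕ)} {Γ Δ : LSeq} {w u : ℕ}
    (hc : Cond4 R w u)
    (k : ∀ R', R ≤ R' → (w, u) ∈ R' → (∀ v, labR v R' → labR v R ∨ v = u) →
      G3 cd R' D Γ Δ) : G3 cd R D Γ Δ := by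
  obtain ⟨s, h1, h2⟩ := hc
  obtain ⟨R', a, b, c, d⟩ := pathR h1 (s4_true h2) cd
  exact d _ _ _ (k R' a b c)

theorem stepD {cd : Bool} {R D : Multiset (ℕ × ℕ)} {Γ Δ : LSeq} {w u a : ℕ}
    (hc : CondD cd R u w) (ha : (a, u) ∈ D)
    (k : ∀ D', D ≤ D' → (a, w) ∈ D' → (∀ p ∈ D', p ∈ D ∨ p.1 = a ∧ labR p.2 R) →
      G3 cd R D' Γ Δ) : G3 cd R D Γ Δ := by
  obtain ⟨s, h1, h2⟩ := condD_path hc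
  obtain ⟨D', a, b, c, d⟩ := pathD h1 h2 D ha
  exact d _ _ (k D' a b c)

theorem listD {cd : Bool} {R : Multiset (ℕ × ℕ)} {Γ Δ : LSeq} {w : ℕ}
    (aus : List (ℕ × ℕ)) : ∀ D, (∀ p ∈ aus, p ∈ D ∧ CondD cd R p.2 w) →
    (∀ D', D ≤ D' → (∀ p ∈ aus, (p.1, w) ∈ D') → G3 cd R D' Γ Δ) → G3 cd R D Γ Δ := by
  induction aus with
  | nil => exact fun D _ k => k D le_rfl (by simp)
  | cons q aus ih =>
    intro D hD k
    obtain ⟨hq, hc⟩ := hD q (by simp)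
    apply stepD (a := q.1) hc hq
    intro D' hle hm _
    apply ih D'
    · intro p hp
      obtain ⟨h1, h2⟩ := hD p (by simp [hp])
      exact ⟨Multiset.mem_of_le hle h1, h2⟩
    · intro D'' hle' hm'
      apply k D'' (hle.trans hle')
      intro p hp
      rcases List.mem_cons.1 hp with rfl | hp
      · exact Multiset.mem_of_le hle' hm
      · exact hm' p hp

theorem dupD {cd : Bool} {R : Multiset (ℕ × ℕ)} {Γ Δ : LSeq} {w : ℕ} (hw : (w, w) ∈ R)
    (as : List ℕ) : ∀ D, (∀ a ∈ as, (a, w) ∈ D) →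
    G3 cd R ((↑(as.map fun a => (a, w)) : Multiset (ℕ × ℕ)) + D) Γ Δ → G3 cd R D Γ Δ := by
  induction as with
  | nil => intro D _ h; simpa using h
  | cons q as ih =>
    intro D hD h
    apply nd' hw (hD q (by simp))
    apply ih
    · intro a ha
      exact Multiset.mem_cons_of_mem (hD a (by simp [ha]))
    · rw [List.map_cons, ← Multiset.cons_coe, Multiset.cons_add] at h
      rw [Multiset.add_cons]
      exact h

structure Ext (Rle Dom : Multiset (ℕ × ℕ)) (Γ Δ : LSeq) (R D : Multiset (ℕ × ℕ)) : Prop where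
  hR : Rle ≤ R
  hD : Dom ≤ D
  lR : ∀ v, labR v R → loccurs v Rle Dom Γ Δ
  lD : ∀ p ∈ D, loccurs p.2 Rle Dom Γ Δ
  pD : ∀ p ∈ D, ∃ v, (p.1, v) ∈ Dom

theorem Ext.mono {Rle Dom R D : Multiset (ℕ × ℕ)} {Γ Δ Γ' Δ' : LSeq}
    (e : Ext Rle Dom Γ Δ R D)
    (h : ∀ v, loccurs v Rle Dom Γ Δ → loccurs v Rle Dom Γ' Δ') : Ext Rle Dom Γ' Δ' R D :=
  ⟨e.hR, e.hD, fun v hv => h v (e.lR v hv), fun p hp => h _ (e.lD p hp), e.pD⟩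

theorem Ext.consR {Rle Dom R D : Multiset (ℕ × ℕ)} {Γ Δ : LSeq} {w u : ℕ}
    (e : Ext Rle Dom Γ Δ R D) : Ext ((w, u) ::ₘ Rle) Dom Γ Δ ((w, u) ::ₘ R) D := by
  have key : ∀ v, loccurs v Rle Dom Γ Δ → loccurs v ((w, u) ::ₘ Rle) Dom Γ Δ := by
    rintro v (⟨x, y, h, h'⟩ | h)
    · exact Or.inl ⟨x, y, Multiset.mem_cons_of_mem h, h'⟩
    · exact Or.inr h
  refine ⟨Multiset.cons_le_cons _ e.hR, e.hD, ?_, fun p hp => key _ (e.lD p hp), e.pD⟩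
  rintro v ⟨p, hp, hv⟩
  rcases Multiset.mem_cons.1 hp with rfl | hp
  · exact Or.inl ⟨w, u, by simp, hv⟩
  · exact key v (e.lR v ⟨p, hp, hv⟩)

theorem Ext.consD {Rle Dom R D : Multiset (ℕ × ℕ)} {Γ Δ : LSeq} {a u : ℕ}
    (e : Ext Rle Dom Γ Δ R D) : Ext Rle ((a, u) ::ₘ Dom) Γ Δ R ((a, u) ::ₘ D) := by
  have key : ∀ v, loccurs v Rle Dom Γ Δ → loccurs v Rle ((a, u) ::ₘ Dom) Γ Δ := by
    rintro v (h | ⟨b, h⟩ | h)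
    · exact Or.inl h
    · exact Or.inr (Or.inl ⟨b, Multiset.mem_cons_of_mem h⟩)
    · exact Or.inr (Or.inr h)
  refine ⟨e.hR, Multiset.cons_le_cons _ e.hD, fun v hv => key v (e.lR v hv), ?_, ?_⟩
  · intro p hp
    rcases Multiset.mem_cons.1 hp with rfl | hp
    · exact Or.inr (Or.inl ⟨a, by simp⟩)
    · exact key _ (e.lD p hp)
  · intro p hp
    rcases Multiset.mem_cons.1 hp with rfl | hp
    · exact ⟨u, by simp⟩
    · obtain ⟨v, hv⟩ := e.pD p hp
      exact ⟨v, Multiset.mem_cons_of_mem hv⟩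

theorem Ext.growR {Rle Dom R R' D : Multiset (ℕ × ℕ)} {Γ Δ : LSeq} {u : ℕ}
    (e : Ext Rle Dom Γ Δ R D) (h : R ≤ R') (hl : ∀ v, labR v R' → labR v R ∨ v = u)
    (hu : loccurs u Rle Dom Γ Δ) : Ext Rle Dom Γ Δ R' D := by
  refine ⟨e.hR.trans h, e.hD, ?_, e.lD, e.pD⟩
  intro v hv
  rcases hl v hv with h | rfl
  · exact e.lR v h
  · exact hu

theorem Ext.growD {Rle Dom R D D' : Multiset (ℕ × ℕ)} {Γ Δ : LSeq} {a u : ℕ}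
    (e : Ext Rle Dom Γ Δ R D) (h : D ≤ D')
    (hl : ∀ p ∈ D', p ∈ D ∨ p.1 = a ∧ labR p.2 R)
    (hu : (a, u) ∈ D) : Ext Rle Dom Γ Δ R D' := by
  refine ⟨e.hR, e.hD.trans h, e.lR, ?_, ?_⟩
  · intro p hp
    rcases hl p hp with h | ⟨-, h⟩
    · exact e.lD p h
    · exact e.lR _ h
  · intro p hp
    rcases hl p hp with h | ⟨h, -⟩
    · exact e.pD p h
    · rw [h]; exact e.pD _ hu

theorem Ext.freshL {Rle Dom R D : Multiset (ℕ × ℕ)} {Γ Δ : LSeq} {v : ℕ}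
    (e : Ext Rle Dom Γ Δ R D) (h : ¬ loccurs v Rle Dom Γ Δ) : ¬ loccurs v R D Γ Δ := by
  rintro (⟨x, y, h1, h2⟩ | ⟨b, h1⟩ | h1)
  · exact h (e.lR v ⟨(x, y), h1, h2⟩)
  · exact h (e.lD _ h1)
  · exact h (Or.inr (Or.inr h1))

theorem Ext.freshP {Rle Dom R D : Multiset (ℕ × ℕ)} {Γ Δ : LSeq} {a : ℕ}
    (e : Ext Rle Dom Γ Δ R D) (h : ¬ poccurs a Dom Γ Δ) : ¬ poccurs a D Γ Δ := by
  rintro (⟨x, h1⟩ | h1)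
  · exact h (Or.inl (e.pD _ h1))
  · exact h (Or.inr h1)

theorem exStep {cd : Bool} {Rle Dom R D : Multiset (ℕ × ℕ)} {Γ Δ : LSeq} {w u a : ℕ}
    {φ : IFml} (hc : CondD cd Rle u w) (ha : (a, u) ∈ Dom)
    (e : Ext Rle Dom Γ ((w, open0 φ a) ::ₘ (w, IFml.ex φ) ::ₘ Δ) R D)
    (ih : ∀ R D, Ext Rle Dom Γ ((w, open0 φ a) ::ₘ (w, IFml.ex φ) ::ₘ Δ) R D →
      G3 cd R D Γ ((w, open0 φ a) ::ₘ (w, IFml.ex φ) ::ₘ Δ)) :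
    G3 cd R D Γ ((w, IFml.ex φ) ::ₘ Δ) := by
  have ha' := Multiset.mem_of_le e.hD ha
  apply stepD (hc.mono e.hR) ha'
  intro D' h1 h2 h3
  have := ih R D' (e.growD h1 h3 ha')
  obtain ⟨D1, rfl⟩ := Multiset.exists_cons_of_mem h2
  exact IDer.exr trivial this

theorem allStep {cd : Bool} {Rle Dom R D : Multiset (ℕ × ℕ)} {Γ Δ : LSeq} {w u v a : ℕ}
    {φ : IFml} (hc : CondD cd Rle u v) (hc' : Cond4 Rle w v) (ha : (a, u) ∈ Dom)
    (e : Ext Rle Dom ((w, IFml.all φ) ::ₘ (v, open0 φ a) ::ₘ Γ) Δ R D)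
    (ih : ∀ R D, Ext Rle Dom ((w, IFml.all φ) ::ₘ (v, open0 φ a) ::ₘ Γ) Δ R D →
      G3 cd R D ((w, IFml.all φ) ::ₘ (v, open0 φ a) ::ₘ Γ) Δ) :
    G3 cd R D ((w, IFml.all φ) ::ₘ Γ) Δ := by
  have ha' := Multiset.mem_of_le e.hD ha
  apply stepR (hc'.mono e.hR)
  intro R' g1 g2 g3
  have e' := e.growR g1 g3 (Or.inr (Or.inr (Or.inl ⟨open0 φ a, by simp⟩)))
  apply stepD (hc.mono e'.hR) ha'
  intro D' h1 h2 h3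
  have := ih R' D' (e'.growD h1 h3 ha')
  obtain ⟨D1, rfl⟩ := Multiset.exists_cons_of_mem h2
  obtain ⟨R1, rfl⟩ := Multiset.exists_cons_of_mem g2
  rw [Multiset.cons_swap] at this
  exact IDer.alll trivial this

theorem main_aux {cd : Bool} {Rle Dom : Multiset (ℕ × ℕ)} {Γ Δ : LSeq}
    (h : IDer cd False False True Rle Dom Γ Δ) :
    ∀ R D, Ext Rle Dom Γ Δ R D → G3 cd R D Γ Δ := by
  induction h with
  | botl => exact fun R D _ => IDer.botl _ _ _ _ _
  | andl _ ih =>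
    intro R D e
    refine IDer.andl (ih R D (e.mono ?_))
    intro v
    simp only [loccurs, Multiset.mem_cons, Prod.mk.injEq]
    grind
  | andr _ _ ih1 ih2 =>
    intro R D e
    refine IDer.andr (ih1 R D (e.mono ?_)) (ih2 R D (e.mono ?_)) <;>
    · intro v
      simp only [loccurs, Multiset.mem_cons, Prod.mk.injEq]
      grind
  | orl _ _ ih1 ih2 =>
    intro R D e
    refine IDer.orl (ih1 R D (e.mono ?_)) (ih2 R D (e.mono ?_)) <;>
    · intro v
      simp only [loccurs, Multiset.mem_cons, Prod.mk.injEq]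
      grind
  | orr _ ih =>
    intro R D e
    refine IDer.orr (ih R D (e.mono ?_))
    intro v
    simp only [loccurs, Multiset.mem_cons, Prod.mk.injEq]
    grind
  | impr hf _ ih =>
    intro R D e
    refine IDer.impr (e.freshL hf) (ih _ _ (e.consR.mono ?_))
    intro v
    simp only [loccurs, Multiset.mem_cons, Prod.mk.injEq]
    grind
  | exl hf _ ih =>
    intro R D e
    refine IDer.exl (e.freshP hf) (ih _ _ (e.consD.mono ?_))
    intro v
    simp only [loccurs, Multiset.mem_cons, Prod.mk.injEq]
    grind
  | allr hl hf _ ih =>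
    intro R D e
    refine IDer.allr (e.freshL hl) (e.freshP hf) (ih _ _ (e.consR.consD.mono ?_))
    intro v
    simp only [loccurs, Multiset.mem_cons, Prod.mk.injEq]
    grind
  | id h => exact h.elim
  | impl h => exact h.elim
  | exr h => exact h.elim
  | alll h => exact h.elim
  | ref h => exact h.elim
  | tra h => exact h.elim
  | nd h => exact h.elim
  | ned h => exact h.elim
  | cdr h => exact h.elim
  | @idN _ Rle Dom Γ Δ w u P aus hD h4 =>
    intro R D e
    apply stepR (h4.mono e.hR)
    intro R' g1 g2 _
    apply IDer.ref trivial (w := w)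
    have hle : Rle ≤ (w, w) ::ₘ R' := (e.hR.trans g1).trans (Multiset.le_cons_self _ _)
    apply listD (w := w) aus
    · intro p hp
      exact ⟨Multiset.mem_of_le e.hD (by simp [hp]), (hD p hp).mono hle⟩
    · intro D' _ hm
      apply dupD (w := w) (by simp) (aus.map Prod.fst)
      · intro a ha
        obtain ⟨p, hp, rfl⟩ := List.mem_map.1 ha
        exact hm p hp
      · obtain ⟨R1, rfl⟩ := Multiset.exists_cons_of_mem g2
        rw [Multiset.cons_swap]
        have hm : (aus.map fun p => ITerm.param p.1) = (aus.map Prod.fst).map ITerm.param := by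
          simp
        rw [hm]
        exact IDer.id trivial _ _ _ _
  | prImp _ hc _ _ ih1 ih2 =>
    intro R D e
    apply stepR (hc.mono e.hR)
    intro R' g1 g2 g3
    have a1 := ih1 R' D (Ext.growR (e.mono (by
      intro v
      simp only [loccurs, Multiset.mem_cons, Prod.mk.injEq]
      grind)) g1 g3 (Or.inr (Or.inr (Or.inr ⟨_, Multiset.mem_cons_self _ _⟩))))
    have a2 := ih2 R' D (Ext.growR (e.mono (by
      intro v
      simp only [loccurs, Multiset.mem_cons, Prod.mk.injEq]
      grind)) g1 g3 (Or.inr (Or.inr (Or.inl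
        ⟨_, Multiset.mem_cons_of_mem (Multiset.mem_cons_self _ _)⟩))))
    obtain ⟨R1, rfl⟩ := Multiset.exists_cons_of_mem g2
    exact IDer.impl trivial a1 a2
  | exr1 _ hc _ ih =>
    intro R D e
    refine exStep hc (Multiset.mem_cons_self _ _) (e.mono ?_) ih
    intro v
    simp only [loccurs, Multiset.mem_cons, Prod.mk.injEq]
    grind
  | exr2 _ hc hf _ ih =>
    intro R D e
    refine IDer.ned trivial (e.freshP hf)
      (exStep hc (Multiset.mem_cons_self _ _) (e.consD.mono ?_) ih)
    intro v
    simp only [loccurs, Multiset.mem_cons, Prod.mk.injEq]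
    grind
  | alll1 _ hc hc' _ ih =>
    intro R D e
    refine allStep hc hc' (Multiset.mem_cons_self _ _) (e.mono ?_) ih
    intro v
    simp only [loccurs, Multiset.mem_cons, Prod.mk.injEq]
    grind
  | alll2 _ hc hc' hf _ ih =>
    intro R D e
    refine IDer.ned trivial (e.freshP hf)
      (allStep hc hc' (Multiset.mem_cons_self _ _) (e.consD.mono ?_) ih)
    intro v
    simp only [loccurs, Multiset.mem_cons, Prod.mk.injEq]
    grind

theorem main_ref {cd : Bool} {Rle Dom : Multiset (ℕ × ℕ)} {Γ Δ : LSeq}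
    (h : IDer cd False False True Rle Dom Γ Δ) : G3 cd Rle Dom Γ Δ := by
  refine main_aux h _ _ ⟨le_rfl, le_rfl, ?_, ?_, ?_⟩
  · rintro v ⟨p, hp, hv⟩
    exact Or.inl ⟨p.1, p.2, hp, hv⟩
  · exact fun p hp => Or.inr (Or.inl ⟨p.1, hp⟩)
  · exact fun p hp => ⟨p.2, hp⟩

/-- Every labelled sequent derivable in the quasi-refined
calculus `IntQL*` is derivable in `G3IntQ`, and every labelled sequent derivable
in `IntQCL*` is derivable in `G3IntQC`. -/
theorem quasi_refined_to_g3 :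
    (∀ (Rle Dom : Multiset (ℕ × ℕ)) (Γ Δ : LSeq),
        IDer false False False True Rle Dom Γ Δ →
        IDer false True True False Rle Dom Γ Δ) ∧
    (∀ (Rle Dom : Multiset (ℕ × ℕ)) (Γ Δ : LSeq),
        IDer true False False True Rle Dom Γ Δ →
        IDer true True True False Rle Dom Γ Δ) := by
  exact ⟨fun _ _ _ _ h => main_ref h, fun _ _ _ _ h => main_ref h⟩

end IntFOL
end
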